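/- arXiv:2308.01289 — 4 statements merged into one kernel-verified Lean document; each statement's English description precedes it below -/
import Mathlib

section
/- For every integer n ≥ 1 and all reals r > 0, k > 0, the three-dimensional inverse Fourier transform of ĝ_n satisfies (1/(2π²r)) Σ_{j=0}^{n−1} (2k²)^j ∫_0^∞ p sin(pr)/(p² + k²)^{j+1} dp = (1/(4π)) (e^{−kr}/r) (1 + Σ_{j=1}^{n−1} (1/(2^{j−1} j!)) Σ_{m=0}^{j−1} ((2j−m−2)! 2^m)/(m! (j−m−1)!) (kr)^{m+1}), where the j = 0 integral is understood as the improper Riemann integral lim_{R→∞} ∫_0^R p sin(pr)/(p² + k²) dp. -/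
open Real Filter MeasureTheory intervalIntegral

/-- The non-oscillatory component `g_n(r,k)` of the 3D Helmholtz Green's function:
`g_n(r,k) = (1/(4π)) (e^{-kr}/r) (1 + ∑_{j=1}^{n-1} (1/(2^{j-1} j!))
  ∑_{m=0}^{j-1} ((2j-m-2)! 2^m)/(m! (j-m-1)!) (kr)^{m+1})`. -/
noncomputable def helmholtzG3 (n : ℕ) (r k : ℝ) : ℝ :=
  (1 / (4 * Real.pi)) * (Real.exp (-(k * r)) / r) *
    (1 + ∑ j ∈ Finset.Ico 1 n,
      (1 / (2 ^ (j - 1) * (Nat.factorial j : ℝ))) *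
        ∑ m ∈ Finset.range j,
          ((Nat.factorial (2 * j - m - 2) : ℝ) * 2 ^ m) /
              ((Nat.factorial m : ℝ) * (Nat.factorial (j - m - 1) : ℝ)) *
            (k * r) ^ (m + 1))

/-!
Integrating by parts once turns each sine integral into the cosine transform of
`1 / (p² + k²)^j`, or of the derivative of `p / (p² + k²)` for `j = 0`. Both are combinations of the
functions `Re (k + ip)^{-(m+1)}`. For `1 / (p² + k²)^j = ((k + ip)(k - ip))^{-j}` the combination is
a partial fraction decomposition in `k + ip` and `k - ip`, whose coefficients are binomials because
the two factors have constant sum `2k`; these are the source of the factorials in `helmholtzG3`.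
Finally `m! Re (k + ip)^{-(m+1)}` is the cosine transform of `v^m e^{-kv}`, by the Laplace integral
`∫₀^∞ v^m e^{-zv} dv = m! / z^{m+1}`, and Fourier inversion evaluates its cosine transform.
-/

open Set Topology FourierTransform

theorem integrable_comp_abs {E : Type*} [NormedAddCommGroup E] {f : ℝ → E}
    (hf : IntegrableOn f (Ioi 0)) : Integrable fun v => f |v| := by
  have h_pos : IntegrableOn (fun v => f |v|) (Ioi 0) :=
    hf.congr_fun (fun v hv => by rw [abs_of_pos hv]) measurableSet_Ioi
  have h_neg : IntegrableOn (fun v => f |v|) (Iio 0) := by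
    rw [← neg_zero] at h_pos
    simpa only [abs_neg] using h_pos.comp_neg_Iio
  rw [← integrableOn_univ, ← Iio_union_Ici (a := (0 : ℝ))]
  exact h_neg.union (integrableOn_Ici_iff_integrableOn_Ioi (by finiteness) |>.mpr h_pos)

/-- The cosine transform `w ↦ ∫₀^∞ cos (w v) f(v) dv` of a function on the half-line, without a
normalizing factor, so that it is an involution up to the factor `π / 2`. -/
noncomputable def cosineTransform (f : ℝ → ℝ) (w : ℝ) : ℝ :=
  ∫ v in Ioi 0, cos (w * v) * f v

theorem cosineTransform_neg (f : ℝ → ℝ) (w : ℝ) :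
    cosineTransform f (-w) = cosineTransform f w := by
  simp [cosineTransform]

theorem cosineTransform_abs (f : ℝ → ℝ) (w : ℝ) : cosineTransform f |w| = cosineTransform f w := by
  rcases abs_choice w with h | h <;> simp [cosineTransform_neg, h]

theorem cosineTransform_const_mul (c : ℝ) (f : ℝ → ℝ) (w : ℝ) :
    cosineTransform (fun v => c * f v) w = c * cosineTransform f w := by
  simp_rw [cosineTransform, mul_left_comm _ c, MeasureTheory.integral_const_mul]

theorem integrableOn_cos_mul {f : ℝ → ℝ} {s : Set ℝ} (hf : IntegrableOn f s) (w : ℝ) :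
    IntegrableOn (fun v => cos (w * v) * f v) s :=
  hf.bdd_mul (c := 1) (by fun_prop) (ae_of_all _ fun _ => abs_cos_le_one _)

theorem cosineTransform_finset_sum {ι : Type*} (s : Finset ι) {f : ι → ℝ → ℝ}
    (hf : ∀ i ∈ s, IntegrableOn (f i) (Ioi 0)) (w : ℝ) :
    cosineTransform (fun v => ∑ i ∈ s, f i v) w = ∑ i ∈ s, cosineTransform (f i) w := by
  simp_rw [cosineTransform, Finset.mul_sum]
  exact integral_finsetSum s fun i hi => integrableOn_cos_mul (hf i hi) w

theorem tendsto_intervalIntegral_cosineTransform {f : ℝ → ℝ} (hf : IntegrableOn f (Ioi 0))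
    (w : ℝ) :
    Tendsto (fun R => ∫ v in (0 : ℝ)..R, cos (w * v) * f v) atTop (𝓝 (cosineTransform f w)) :=
  intervalIntegral_tendsto_integral_Ioi 0 (integrableOn_cos_mul hf w) tendsto_id

theorem fourier_comp_abs {f : ℝ → ℝ} (hf : IntegrableOn f (Ioi 0)) (w : ℝ) :
    𝓕 (fun v : ℝ => (f |v| : ℂ)) w = ((2 * cosineTransform f (2 * π * w) : ℝ) : ℂ) := by
  have hg : Integrable fun v : ℝ => (f |v| : ℂ) := (integrable_comp_abs hf).ofReal
  have h_exp (s : ℝ) :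
      Integrable fun v : ℝ => Complex.exp ((-2 * π * v * s : ℝ) * Complex.I) • (f |v| : ℂ) :=
    hg.bdd_mul (c := 1) (by fun_prop) (ae_of_all _ fun v => (Complex.norm_exp_ofReal_mul_I _).le)
  have h_even : 𝓕 (fun v : ℝ => (f |v| : ℂ)) (-w) = 𝓕 (fun v : ℝ => (f |v| : ℂ)) w := by
    rw [← fourierInv_eq_fourier_neg, fourierInv_eq_fourier_comp_neg]
    simp only [abs_neg]
  have h_cos (v : ℝ) : Complex.exp ((-2 * π * v * w : ℝ) * Complex.I) • (f |v| : ℂ) +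
      Complex.exp ((-2 * π * v * -w : ℝ) * Complex.I) • (f |v| : ℂ) =
      ((2 * (cos (2 * π * w * |v|) * f |v|) : ℝ) : ℂ) := by
    have h_abs : cos (2 * π * w * |v|) = cos (2 * π * w * v) := by
      rcases abs_choice v with h | h <;> simp [h]
    rw [h_abs]
    push_cast
    rw [Complex.cos, smul_eq_mul, smul_eq_mul]
    ring_nf
  have h_two : 2 * 𝓕 (fun v : ℝ => (f |v| : ℂ)) w =
      ((2 * (2 * cosineTransform f (2 * π * w)) : ℝ) : ℂ) := by
    rw [two_mul]
    nth_rw 2 [← h_even]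
    rw [fourier_real_eq_integral_exp_smul, fourier_real_eq_integral_exp_smul,
      ← integral_add (h_exp w) (h_exp (-w))]
    simp_rw [h_cos]
    rw [integral_complex_ofReal, MeasureTheory.integral_const_mul,
      integral_comp_abs (f := fun v => cos (2 * π * w * v) * f v), cosineTransform]
  push_cast at h_two ⊢
  exact mul_left_cancel₀ two_ne_zero h_two

/-- Fourier inversion, applied to the even extension of `f`. -/
theorem cosineTransform_cosineTransform {f : ℝ → ℝ} (hc : ContinuousOn f (Ici 0))
    (hf : IntegrableOn f (Ioi 0)) (hF : IntegrableOn (cosineTransform f) (Ioi 0))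
    {r : ℝ} (hr : 0 ≤ r) : cosineTransform (cosineTransform f) r = π / 2 * f r := by
  set F : ℝ → ℝ := fun w => 2 * cosineTransform f (2 * π * w) with hF_def
  have hFi : IntegrableOn F (Ioi 0) := by
    refine Integrable.const_mul ?_ 2
    rw [← IntegrableOn, integrableOn_Ioi_comp_mul_left_iff _ _ (by positivity), mul_zero]
    exact hF
  have h_fourier : 𝓕 (fun v : ℝ => (f |v| : ℂ)) = fun w : ℝ => (F |w| : ℂ) := by
    ext w
    rw [fourier_comp_abs hf, hF_def]
    dsimp only
    rw [← cosineTransform_abs f (2 * π * w), abs_mul, abs_of_pos two_pi_pos]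
  have h_cont : Continuous fun v : ℝ => (f |v| : ℂ) :=
    Complex.continuous_ofReal.comp (hc.comp_continuous continuous_abs abs_nonneg)
  have h_inv := congrFun (h_cont.fourierInv_fourier_eq (integrable_comp_abs hf).ofReal
    (h_fourier ▸ (integrable_comp_abs hFi).ofReal)) r
  rw [h_fourier, fourierInv_eq_fourier_neg, fourier_comp_abs hFi, abs_of_nonneg hr,
    Complex.ofReal_inj] at h_inv
  have h_scale : cosineTransform F (2 * π * -r) =
      π⁻¹ * cosineTransform (cosineTransform f) r := by
    rw [hF_def, cosineTransform_const_mul, mul_neg, cosineTransform_neg, cosineTransform]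
    simp_rw [mul_right_comm _ r, mul_comm _ r]
    rw [integral_comp_mul_left_Ioi (fun p => cos (r * p) * cosineTransform f p) 0 two_pi_pos,
      mul_zero, ← cosineTransform, smul_eq_mul]
    field_simp
  rw [← h_inv, h_scale]
  field_simp

theorem integrableOn_pow_mul_cexp_neg_mul (m : ℕ) {z : ℂ} (hz : 0 < z.re) :
    IntegrableOn (fun v : ℝ => (v : ℂ) ^ m * Complex.exp (-z * v)) (Ioi 0) := by
  have h_real : IntegrableOn (fun v : ℝ => v ^ (m : ℝ) * exp (-z.re * v ^ (1 : ℝ))) (Ioi 0) :=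
    integrableOn_rpow_mul_exp_neg_mul_rpow (by linarith [m.cast_nonneg (α := ℝ)]) one_pos hz
  refine h_real.mono' (by fun_prop) <|
    (ae_restrict_iff' measurableSet_Ioi).mpr <| ae_of_all _ fun v (hv : 0 < v) => ?_
  simp [Complex.norm_exp, abs_of_pos hv]

theorem tendsto_pow_mul_cexp_neg_mul_atTop (m : ℕ) {z : ℂ} (hz : 0 < z.re) :
    Tendsto (fun v : ℝ => (v : ℂ) ^ m * Complex.exp (-z * v)) atTop (𝓝 0) := by
  rw [tendsto_zero_iff_norm_tendsto_zero]
  refine (tendsto_rpow_mul_exp_neg_mul_atTop_nhds_zero m z.re hz).congr' ?_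
  filter_upwards [eventually_ge_atTop 0] with v hv
  simp [Complex.norm_exp, abs_of_nonneg hv]

theorem integral_pow_mul_cexp_neg_mul (m : ℕ) {z : ℂ} (hz : 0 < z.re) :
    ∫ v : ℝ in Ioi 0, (v : ℂ) ^ m * Complex.exp (-z * v) = m.factorial * z⁻¹ ^ (m + 1) := by
  have hz0 : z ≠ 0 := by rintro rfl; simp at hz
  induction m with
  | zero => simpa using integral_exp_mul_complex_Ioi (a := -z) (by simpa using hz) 0
  | succ m ih =>
    have h_deriv (v : ℝ) : HasDerivAt
        (fun v : ℝ => (v : ℂ) ^ (m + 1) * Complex.exp (-z * v))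
        ((m + 1) * ((v : ℂ) ^ m * Complex.exp (-z * v)) -
          z * ((v : ℂ) ^ (m + 1) * Complex.exp (-z * v))) v := by
      have h_pow := (hasDerivAt_id v).ofReal_comp.fun_pow (m + 1)
      have h_exp := ((hasDerivAt_id v).ofReal_comp.const_mul (-z)).cexp
      refine (h_pow.fun_mul h_exp).congr_deriv ?_
      simp only [id, Nat.add_sub_cancel, Complex.ofReal_one]
      push_cast
      ring
    have h_int_m := (integrableOn_pow_mul_cexp_neg_mul m hz).const_mul (m + 1)
    have h_int_succ := (integrableOn_pow_mul_cexp_neg_mul (m + 1) hz).const_mul z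
    have h_parts := integral_Ioi_of_hasDerivAt_of_tendsto
      (h_deriv 0).continuousAt.continuousWithinAt (fun v _ => h_deriv v) (h_int_m.sub h_int_succ)
      (tendsto_pow_mul_cexp_neg_mul_atTop _ hz)
    rw [integral_sub h_int_m h_int_succ, MeasureTheory.integral_const_mul,
      MeasureTheory.integral_const_mul, ih] at h_parts
    simp only [Complex.ofReal_zero, zero_pow m.succ_ne_zero, zero_mul, sub_zero, sub_eq_zero]
      at h_parts
    rw [← mul_right_inj' hz0, ← h_parts, Nat.factorial_succ]
    push_cast
    rw [pow_succ z⁻¹ (m + 1)]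
    field_simp

theorem cosineTransform_pow_mul_exp_neg_mul (m : ℕ) {k : ℝ} (hk : 0 < k) (w : ℝ) :
    cosineTransform (fun v => v ^ m * exp (-(k * v))) w =
      m.factorial * ((k + w * Complex.I : ℂ)⁻¹ ^ (m + 1)).re := by
  have hz : 0 < (k + w * Complex.I : ℂ).re := by simpa using hk
  have h_re (v : ℝ) : cos (w * v) * (v ^ m * exp (-(k * v))) =
      ((v : ℂ) ^ m * Complex.exp (-(k + w * Complex.I) * v)).re := by
    have h_arg : -(k + w * Complex.I) * v = (-(k * v) : ℝ) + (-(w * v) : ℝ) * Complex.I := by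
      push_cast
      ring
    rw [h_arg, Complex.exp_add_mul_I, ← Complex.ofReal_exp, ← Complex.ofReal_cos,
      ← Complex.ofReal_sin, ← Complex.ofReal_pow, Complex.re_ofReal_mul, Complex.re_ofReal_mul,
      Complex.add_re, Complex.re_ofReal_mul, Complex.ofReal_re, Complex.I_re, cos_neg]
    ring
  rw [← Complex.re_ofReal_mul, Complex.ofReal_natCast, ← integral_pow_mul_cexp_neg_mul m hz]
  simp_rw [cosineTransform, h_re]
  exact integral_re (integrableOn_pow_mul_cexp_neg_mul m hz)

theorem add_mul_I_ne_zero {k : ℝ} (hk : k ≠ 0) (p : ℝ) : (k + p * Complex.I : ℂ) ≠ 0 :=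
  fun h => hk (by simpa using congrArg Complex.re h)

theorem integrable_inv_sq_add_sq {k : ℝ} (hk : k ≠ 0) :
    Integrable fun p : ℝ => (p ^ 2 + k ^ 2)⁻¹ := by
  refine ((integrable_inv_one_add_sq.comp_div hk).const_mul (k ^ 2)⁻¹).congr
    (ae_of_all _ fun p => ?_)
  dsimp only
  field_simp
  ring

theorem re_inv_add_mul_I_sq (k p : ℝ) :
    ((k + p * Complex.I : ℂ)⁻¹ ^ 2).re = (k ^ 2 - p ^ 2) / (p ^ 2 + k ^ 2) ^ 2 := by
  have h_sq : (k + p * Complex.I : ℂ) ^ 2 = (k ^ 2 - p ^ 2 : ℝ) + (2 * k * p : ℝ) * Complex.I := by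
    push_cast
    linear_combination (p ^ 2 : ℂ) * Complex.I_sq
  rw [inv_pow, Complex.inv_re, map_pow, Complex.normSq_add_mul_I, h_sq, add_comm (k ^ 2)]
  rw [Complex.add_re, Complex.re_ofReal_mul, Complex.ofReal_re, Complex.I_re, mul_zero, add_zero]

theorem integrable_re_inv_add_mul_I_pow (m : ℕ) {k : ℝ} (hk : k ≠ 0) :
    Integrable fun p : ℝ => ((k + p * Complex.I : ℂ)⁻¹ ^ (m + 1)).re := by
  cases m with
  | zero =>
    refine ((integrable_inv_sq_add_sq hk).const_mul k).congr (ae_of_all _ fun p => ?_)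
    simp [Complex.inv_re, Complex.normSq_add_mul_I, div_eq_mul_inv, add_comm]
  | succ m =>
    have h_cont : Continuous fun p : ℝ => ((k + p * Complex.I : ℂ)⁻¹ ^ (m + 1 + 1)).re :=
      Complex.continuous_re.comp (((by fun_prop : Continuous _).inv₀ (add_mul_I_ne_zero hk)).pow _)
    refine ((integrable_inv_sq_add_sq hk).const_mul (|k|⁻¹ ^ m)).mono'
      h_cont.aestronglyMeasurable (ae_of_all _ fun p => ?_)
    have h_norm : |k| ≤ ‖(k + p * Complex.I : ℂ)‖ := by
      simpa using Complex.abs_re_le_norm (k + p * Complex.I : ℂ)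
    calc ‖((k + p * Complex.I : ℂ)⁻¹ ^ (m + 1 + 1)).re‖
        ≤ ‖(k + p * Complex.I : ℂ)⁻¹ ^ (m + 1 + 1)‖ := Complex.abs_re_le_norm _
      _ = ‖(k + p * Complex.I : ℂ)‖⁻¹ ^ m * (‖(k + p * Complex.I : ℂ)‖ ^ 2)⁻¹ := by
        rw [norm_pow, norm_inv]; ring
      _ ≤ |k|⁻¹ ^ m * (p ^ 2 + k ^ 2)⁻¹ := by
        rw [Complex.sq_norm, Complex.normSq_add_mul_I, add_comm (k ^ 2)]
        have := abs_pos.mpr hk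
        gcongr

theorem cosineTransform_re_inv_add_mul_I_pow (m : ℕ) {k r : ℝ} (hk : 0 < k) (hr : 0 ≤ r) :
    cosineTransform (fun p => ((k + p * Complex.I : ℂ)⁻¹ ^ (m + 1)).re) r =
      π / 2 * (r ^ m * exp (-(k * r)) / m.factorial) := by
  have h_transform : cosineTransform (fun v => (m.factorial : ℝ)⁻¹ * (v ^ m * exp (-(k * v)))) =
      fun w : ℝ => ((k + w * Complex.I : ℂ)⁻¹ ^ (m + 1)).re := by
    ext w
    rw [cosineTransform_const_mul, cosineTransform_pow_mul_exp_neg_mul m hk]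
    field_simp
  have h_int : IntegrableOn (fun v => v ^ m * exp (-(k * v))) (Ioi 0) := by
    simpa using integrableOn_rpow_mul_exp_neg_mul_rpow
      (by linarith [m.cast_nonneg (α := ℝ)] : (-1 : ℝ) < m) one_pos hk
  rw [← h_transform, cosineTransform_cosineTransform (by fun_prop) (h_int.const_mul _)
    (h_transform ▸ (integrable_re_inv_add_mul_I_pow m hk.ne').integrableOn) hr]
  ring

section PartialFraction

variable {R : Type*} [Semiring R]

/-- The part in powers of `u` of the partial fraction decomposition of `u ^ (a + 1) * v ^ (b + 1)`.
Here `u` and `v` stand for the inverses of two linear forms with constant sum, rescaled so that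
`u * v = u + v`, which keeps the decomposition free of division. -/
def partialFractionPart (a b : ℕ) (u : R) : R :=
  ∑ m ∈ Finset.range (a + 1), ((a + b - m).choose b : R) * u ^ (m + 1)

theorem partialFractionPart_zero_left (b : ℕ) (u : R) : partialFractionPart 0 b u = u := by
  simp [partialFractionPart]

theorem partialFractionPart_succ_zero (a : ℕ) (u : R) :
    partialFractionPart (a + 1) 0 u = partialFractionPart a 0 u + u ^ (a + 2) := by
  simp [partialFractionPart, Finset.sum_range_succ _ (a + 1)]

theorem partialFractionPart_succ_succ (a b : ℕ) (u : R) :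
    partialFractionPart (a + 1) (b + 1) u =
      partialFractionPart a (b + 1) u + partialFractionPart (a + 1) b u := by
  have h_extend : partialFractionPart a (b + 1) u =
      ∑ m ∈ Finset.range (a + 2), ((a + b + 1 - m).choose (b + 1) : R) * u ^ (m + 1) := by
    rw [Finset.sum_range_succ, Nat.choose_eq_zero_of_lt (by omega : a + b + 1 - (a + 1) < b + 1)]
    simp [partialFractionPart, add_assoc]
  rw [h_extend, partialFractionPart, partialFractionPart, ← Finset.sum_add_distrib]
  refine Finset.sum_congr rfl fun m hm => ?_
  have hm := Finset.mem_range.mp hm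
  rw [show a + 1 + (b + 1) - m = a + b + 1 - m + 1 by omega,
    show a + 1 + b - m = a + b + 1 - m by omega, Nat.choose_succ_succ']
  push_cast
  rw [add_mul, add_comm]

theorem partialFractionPart_map {S : Type*} [Semiring S] (φ : R →+* S) (a b : ℕ) (u : R) :
    partialFractionPart a b (φ u) = φ (partialFractionPart a b u) := by
  simp [partialFractionPart]

end PartialFraction

section PartialFractionDecomposition

variable {R : Type*} [CommSemiring R] {u v : R}

theorem pow_succ_mul_eq_partialFractionPart_add (huv : u * v = u + v) (a : ℕ) :
    u ^ (a + 1) * v = partialFractionPart a 0 u + v := by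
  induction a with
  | zero => simp [partialFractionPart_zero_left, huv]
  | succ a ih =>
    calc u ^ (a + 1 + 1) * v = u ^ (a + 1) * (u * v) := by ring
      _ = u ^ (a + 1) * v + u ^ (a + 2) := by rw [huv]; ring
      _ = partialFractionPart (a + 1) 0 u + v := by
        rw [ih, partialFractionPart_succ_zero, add_right_comm]

theorem pow_succ_mul_pow_succ_eq_partialFractionPart_add (huv : u * v = u + v) (a b : ℕ) :
    u ^ (a + 1) * v ^ (b + 1) = partialFractionPart a b u + partialFractionPart b a v := by
  induction a generalizing b with
  | zero =>
    have hvu : v * u = v + u := by rw [mul_comm, huv, add_comm]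
    rw [partialFractionPart_zero_left, zero_add, pow_one, mul_comm,
      pow_succ_mul_eq_partialFractionPart_add hvu, add_comm]
  | succ a iha =>
    induction b with
    | zero =>
      rw [partialFractionPart_zero_left, zero_add, pow_one,
        pow_succ_mul_eq_partialFractionPart_add huv]
    | succ b ihb =>
      calc u ^ (a + 1 + 1) * v ^ (b + 1 + 1) = u ^ (a + 1) * v ^ (b + 1) * (u * v) := by ring
        _ = u ^ (a + 1) * v ^ (b + 1 + 1) + u ^ (a + 1 + 1) * v ^ (b + 1) := by rw [huv]; ring
        _ = partialFractionPart (a + 1) (b + 1) u + partialFractionPart (b + 1) (a + 1) v := by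
          rw [iha, ihb, partialFractionPart_succ_succ, partialFractionPart_succ_succ]
          ring

end PartialFractionDecomposition

theorem inv_sq_add_sq_pow_eq_sum_re {k : ℝ} (hk : k ≠ 0) (i : ℕ) (p : ℝ) :
    ((p ^ 2 + k ^ 2) ^ (i + 1))⁻¹ = 2 / (2 * k) ^ (2 * i + 1) *
      ∑ m ∈ Finset.range (i + 1), ((2 * i - m).choose i : ℝ) * (2 * k) ^ m *
        ((k + p * Complex.I : ℂ)⁻¹ ^ (m + 1)).re := by
  set z : ℂ := k + p * Complex.I with hz_def
  set u : ℂ := (2 * k : ℝ) * z⁻¹ with hu_def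
  have h_normSq : Complex.normSq z = p ^ 2 + k ^ 2 := by
    rw [hz_def, Complex.normSq_add_mul_I, add_comm]
  have h_prod : Complex.normSq u = (2 * k) ^ 2 / (p ^ 2 + k ^ 2) := by
    rw [hu_def, Complex.normSq_mul, Complex.normSq_ofReal, Complex.normSq_inv, h_normSq, ← sq,
      div_eq_mul_inv]
  have h_re : 2 * u.re = (2 * k) ^ 2 / (p ^ 2 + k ^ 2) := by
    rw [hu_def, Complex.re_ofReal_mul, Complex.inv_re, h_normSq, hz_def, Complex.add_re,
      Complex.re_ofReal_mul, Complex.I_re, Complex.ofReal_re]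
    ring
  have h_sum : u * starRingEnd ℂ u = u + starRingEnd ℂ u := by
    rw [Complex.mul_conj, Complex.add_conj, h_prod, h_re]
  have h_pow : ((2 * k) ^ 2 / (p ^ 2 + k ^ 2)) ^ (i + 1) = 2 * (partialFractionPart i i u).re := by
    have h := pow_succ_mul_pow_succ_eq_partialFractionPart_add h_sum i i
    rw [← mul_pow, Complex.mul_conj, partialFractionPart_map, Complex.add_conj, h_prod] at h
    exact_mod_cast h
  have h_part : (partialFractionPart i i u).re = 2 * k *
      ∑ m ∈ Finset.range (i + 1), ((2 * i - m).choose i : ℝ) * (2 * k) ^ m *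
        (z⁻¹ ^ (m + 1)).re := by
    rw [partialFractionPart, Complex.re_sum, Finset.mul_sum]
    refine Finset.sum_congr rfl fun m _ => ?_
    rw [hu_def, mul_pow, ← Complex.ofReal_pow, ← two_mul, ← Complex.ofReal_natCast,
      Complex.re_ofReal_mul, Complex.re_ofReal_mul]
    ring
  rw [h_part, div_pow, ← pow_mul] at h_pow
  rw [← mul_right_inj' (pow_ne_zero (2 * (i + 1)) (mul_ne_zero two_ne_zero hk)),
    ← div_eq_mul_inv, h_pow, mul_add_one, pow_add]
  field_simp
  ring

theorem integrable_inv_sq_add_sq_pow {k : ℝ} (hk : k ≠ 0) (i : ℕ) :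
    Integrable fun p : ℝ => ((p ^ 2 + k ^ 2) ^ (i + 1))⁻¹ := by
  simp_rw [inv_sq_add_sq_pow_eq_sum_re hk]
  exact (integrable_finsetSum _ fun m _ =>
    (integrable_re_inv_add_mul_I_pow m hk).const_mul _).const_mul _

theorem cosineTransform_inv_sq_add_sq_pow {k r : ℝ} (hk : 0 < k) (hr : 0 ≤ r) (i : ℕ) :
    cosineTransform (fun p => ((p ^ 2 + k ^ 2) ^ (i + 1))⁻¹) r =
      π * exp (-(k * r)) / (2 * k) ^ (2 * i + 1) *
        ∑ m ∈ Finset.range (i + 1), ((2 * i - m).choose i : ℝ) * (2 * k * r) ^ m / m.factorial := by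
  simp_rw [inv_sq_add_sq_pow_eq_sum_re hk.ne']
  rw [cosineTransform_const_mul, cosineTransform_finset_sum _ fun m _ =>
    ((integrable_re_inv_add_mul_I_pow m hk.ne').const_mul _).integrableOn, Finset.mul_sum,
    Finset.mul_sum]
  refine Finset.sum_congr rfl fun m _ => ?_
  rw [cosineTransform_const_mul, cosineTransform_re_inv_add_mul_I_pow m hk hr, mul_pow (2 * k)]
  field_simp

theorem tendsto_intervalIntegral_of_hasDerivAt_sub {F f g : ℝ → ℝ} {a l L : ℝ}
    (hF : ∀ p, HasDerivAt F (f p - g p) p) (hf : Continuous f) (hg : Continuous g)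
    (h_lim : Tendsto F atTop (𝓝 l)) (h_int : Tendsto (fun R => ∫ p in a..R, f p) atTop (𝓝 L)) :
    Tendsto (fun R => ∫ p in a..R, g p) atTop (𝓝 (L - (l - F a))) := by
  refine (h_int.sub (h_lim.sub_const (F a))).congr fun R => ?_
  rw [← integral_eq_sub_of_hasDerivAt (fun p _ => hF p) ((hf.sub hg).intervalIntegrable _ _),
    intervalIntegral.integral_sub (hf.intervalIntegrable _ _) (hg.intervalIntegrable _ _),
    sub_sub_cancel]

theorem tendsto_div_sq_add_sq_atTop (k : ℝ) :
    Tendsto (fun p : ℝ => p / (p ^ 2 + k ^ 2)) atTop (𝓝 0) := by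
  refine squeeze_zero' ?_ ?_ tendsto_inv_atTop_zero
  · filter_upwards [eventually_ge_atTop 0] with p hp using by positivity
  · filter_upwards [eventually_gt_atTop 0] with p hp
    calc p / (p ^ 2 + k ^ 2) ≤ p / p ^ 2 := by gcongr; exact le_add_of_nonneg_right (sq_nonneg k)
      _ = p⁻¹ := by field_simp

theorem tendsto_integral_mul_sin_div_sq_add_sq {r k : ℝ} (hr : 0 < r) (hk : 0 < k) :
    Tendsto (fun R => ∫ p in (0 : ℝ)..R, p * sin (p * r) / (p ^ 2 + k ^ 2)) atTop
      (𝓝 (π / 2 * exp (-(k * r)))) := by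
  have h_ne (p : ℝ) : p ^ 2 + k ^ 2 ≠ 0 := by positivity
  have h_deriv (p : ℝ) : HasDerivAt (fun p => r⁻¹ * (cos (r * p) * (p / (p ^ 2 + k ^ 2))))
      (r⁻¹ * (cos (r * p) * ((k ^ 2 - p ^ 2) / (p ^ 2 + k ^ 2) ^ 2)) -
        p * sin (p * r) / (p ^ 2 + k ^ 2)) p := by
    have h_cos := ((hasDerivAt_id p).const_mul r).cos
    have h_div := (hasDerivAt_id p).fun_div ((hasDerivAt_pow 2 p).add_const (k ^ 2)) (h_ne p)
    refine ((h_cos.fun_mul h_div).const_mul r⁻¹).congr_deriv ?_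
    have := h_ne p
    simp only [id, mul_comm r]
    field_simp
    ring
  have h_boundary : Tendsto (fun p => r⁻¹ * (cos (r * p) * (p / (p ^ 2 + k ^ 2)))) atTop (𝓝 0) := by
    simpa using (bdd_le_mul_tendsto_zero' 1 (.of_forall fun p => abs_cos_le_one (r * p))
      (tendsto_div_sq_add_sq_atTop k)).const_mul r⁻¹
  have h_cosine := (tendsto_intervalIntegral_cosineTransform
    (integrable_re_inv_add_mul_I_pow 1 hk.ne').integrableOn r).const_mul r⁻¹
  rw [cosineTransform_re_inv_add_mul_I_pow 1 hk hr.le] at h_cosine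
  simp_rw [one_add_one_eq_two, re_inv_add_mul_I_sq, ← intervalIntegral.integral_const_mul]
    at h_cosine
  have h_parts := tendsto_intervalIntegral_of_hasDerivAt_sub h_deriv
    (by fun_prop (disch := simpa)) (by fun_prop (disch := simpa)) h_boundary h_cosine
  have h_value : r⁻¹ * (π / 2 * (r ^ 1 * exp (-(k * r)) / Nat.factorial 1)) -
      (0 - r⁻¹ * (cos (r * 0) * (0 / (0 ^ 2 + k ^ 2)))) = π / 2 * exp (-(k * r)) := by
    rw [Nat.factorial_one, Nat.cast_one, zero_div]
    field_simp
    ring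
  rwa [h_value] at h_parts

theorem tendsto_integral_mul_sin_div_sq_add_sq_pow (r : ℝ) {k : ℝ} (hk : k ≠ 0) (i : ℕ) :
    Tendsto (fun R => ∫ p in (0 : ℝ)..R, p * sin (p * r) / (p ^ 2 + k ^ 2) ^ (i + 2)) atTop
      (𝓝 (r / (2 * (i + 1)) * cosineTransform (fun p => ((p ^ 2 + k ^ 2) ^ (i + 1))⁻¹) r)) := by
  have h_ne (p : ℝ) : p ^ 2 + k ^ 2 ≠ 0 := by positivity
  have h_deriv (p : ℝ) : HasDerivAt
      (fun p => (2 * (i + 1) : ℝ)⁻¹ * (sin (r * p) * ((p ^ 2 + k ^ 2) ^ (i + 1))⁻¹))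
      (r / (2 * (i + 1)) * (cos (r * p) * ((p ^ 2 + k ^ 2) ^ (i + 1))⁻¹) -
        p * sin (p * r) / (p ^ 2 + k ^ 2) ^ (i + 2)) p := by
    have h_sin := ((hasDerivAt_id p).const_mul r).sin
    have h_inv := (((hasDerivAt_pow 2 p).add_const (k ^ 2)).fun_pow (i + 1)).fun_inv
      (pow_ne_zero _ (h_ne p))
    refine ((h_sin.fun_mul h_inv).const_mul _).congr_deriv ?_
    have := h_ne p
    simp only [id, mul_comm r]
    push_cast
    field_simp
    ring
  have h_boundary : Tendsto
      (fun p => (2 * (i + 1) : ℝ)⁻¹ * (sin (r * p) * ((p ^ 2 + k ^ 2) ^ (i + 1))⁻¹)) atTop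
      (𝓝 0) := by
    have h_inv : Tendsto (fun p : ℝ => ((p ^ 2 + k ^ 2) ^ (i + 1))⁻¹) atTop (𝓝 0) :=
      ((tendsto_pow_atTop i.succ_ne_zero).comp (tendsto_atTop_add_const_right _ _
        (tendsto_pow_atTop two_ne_zero))).inv_tendsto_atTop
    simpa using (bdd_le_mul_tendsto_zero' 1 (.of_forall fun p => abs_sin_le_one (r * p))
      h_inv).const_mul (2 * (i + 1) : ℝ)⁻¹
  have h_cosine := (tendsto_intervalIntegral_cosineTransform
    (integrable_inv_sq_add_sq_pow hk i).integrableOn r).const_mul (r / (2 * (i + 1)))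
  simp_rw [← intervalIntegral.integral_const_mul] at h_cosine
  simpa using tendsto_intervalIntegral_of_hasDerivAt_sub h_deriv
    (by fun_prop (disch := simpa)) (by fun_prop (disch := simpa)) h_boundary h_cosine

theorem helmholtzG3_one (r k : ℝ) : helmholtzG3 1 r k = 1 / (4 * π) * (exp (-(k * r)) / r) := by
  simp [helmholtzG3]

theorem helmholtzG3_add_two (i : ℕ) {r k : ℝ} (hr : 0 < r) (hk : 0 < k) :
    helmholtzG3 (i + 2) r k = helmholtzG3 (i + 1) r k +
      1 / (2 * π ^ 2 * r) * ((2 * k ^ 2) ^ (i + 1) * (r / (2 * (i + 1)) *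
        cosineTransform (fun p => ((p ^ 2 + k ^ 2) ^ (i + 1))⁻¹) r)) := by
  rw [helmholtzG3, Finset.sum_Ico_succ_top (by omega), ← add_assoc, mul_add, ← helmholtzG3,
    cosineTransform_inv_sq_add_sq_pow hk hr.le, add_right_inj]
  simp only [Finset.mul_sum]
  refine Finset.sum_congr rfl fun m hm => ?_
  have hm := Finset.mem_range.mp hm
  rw [Nat.cast_choose ℝ (by omega : i ≤ 2 * i - m)]
  rw [show 2 * (i + 1) - m - 2 = 2 * i - m by omega, show i + 1 - m - 1 = i - m by omega,
    show 2 * i - m - i = i - m by omega, Nat.add_sub_cancel, Nat.factorial_succ i]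
  push_cast
  field_simp
  ring

/-- For every integer `n ≥ 1` and all reals `r > 0`, `k > 0`,
the 3D inverse Fourier transform of `ĝ_n` satisfies
`(1/(2π²r)) ∑_{j=0}^{n-1} (2k²)^j ∫_0^∞ p sin(pr)/(p² + k²)^{j+1} dp = g_n(r,k)`,
where the integrals are understood as improper Riemann integrals
`lim_{R→∞} ∫_0^R p sin(pr)/(p² + k²)^{j+1} dp` (this limiting interpretation is
needed for the conditionally convergent `j = 0` term). -/
theorem helmholtzG3_inverse_fourier (n : ℕ) (hn : 1 ≤ n) (r k : ℝ)
    (hr : 0 < r) (hk : 0 < k) :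
    Tendsto (fun R : ℝ =>
        (1 / (2 * Real.pi ^ 2 * r)) * ∑ j ∈ Finset.range n,
          (2 * k ^ 2) ^ j *
            ∫ p in (0 : ℝ)..R, p * Real.sin (p * r) / (p ^ 2 + k ^ 2) ^ (j + 1))
      atTop (nhds (helmholtzG3 n r k)) := by
  induction n, hn using Nat.le_induction with
  | base =>
    have h_value : helmholtzG3 1 r k = 1 / (2 * π ^ 2 * r) * (π / 2 * exp (-(k * r))) := by
      rw [helmholtzG3_one]
      field_simp
      norm_num
    simpa only [Finset.sum_range_one, pow_zero, one_mul, zero_add, pow_one, h_value] using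
      (tendsto_integral_mul_sin_div_sq_add_sq hr hk).const_mul (1 / (2 * π ^ 2 * r))
  | succ n hn ih =>
    obtain ⟨i, rfl⟩ := Nat.exists_eq_add_of_le' hn
    simp_rw [Finset.sum_range_succ _ (i + 1), mul_add]
    rw [helmholtzG3_add_two i hr hk]
    exact ih.add (((tendsto_integral_mul_sin_div_sq_add_sq_pow r hk.ne' i).const_mul _).const_mul _)
end

section
/- For every integer n ≥ 1 and every k > 0, there exists a function f : ℝ³ → ℝ of class C^{2n−2} such that f(x) = cos(k‖x‖)/(4π‖x‖) − g_n(‖x‖, k) for all x ≠ 0; that is, the real part of the oscillatory component of the 3D Helmholtz Green's function has continuous partial derivatives at zero up to order 2n − 2. -/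
/-!
Write `t = kr` and `θ_j` for the reverse Bessel polynomials. Then `4πr · g_n(r, k)` is
`exp (-t √(1 - 2z))`, expanded in powers of `z`, truncated before `z ^ n` and evaluated at `z = 1`:
the coefficient of `z ^ (j + 1)` is `t exp (-t) θ_j(t) / (j + 1)!`. The part of `exp (-t √(1 - 2z))`
even in `t` is `∑ t ^ (2m) (1 - 2z) ^ m / (2m)!`, whose `m`-th term has degree `m` in `z`, so for
`m < n` the truncation loses nothing and at `z = 1` leaves the coefficient `(-1) ^ m / (2m)!` of the
cosine. On power series this rests on `θ_{j+1} - θ_{j+1}' = X θ_j`, that is,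
`(exp (-X) θ_{j+1})' = -X exp (-X) θ_j`. Hence `cos t - 4πr · g_n` is an everywhere convergent
power series in `t` without the even powers below `2n`. Division by `r` leaves only even powers of
`‖x‖`, which are smooth, and odd powers from `‖x‖ ^ (2n - 1)` on, which are of class `C ^ (2n - 2)`:
away from the origin the `m`-th derivative of `‖x‖ ^ p` is homogeneous of degree `p - m`.
-/

open Filter Topology Asymptotics Finset
open scoped PowerSeries Polynomial Nat

section FlatPoint

variable {𝕜 E F : Type*} [NontriviallyNormedField 𝕜] [NormedAddCommGroup E] [NormedSpace 𝕜 E]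
  [NormedAddCommGroup F] [NormedSpace 𝕜 F] {f : E → F} {x₀ : E} {d : ℕ}

theorem isBigO_nhds_iteratedFDeriv_of_nhdsNE (h₀ : f x₀ = 0)
    (hO : ∀ m ≤ d, iteratedFDeriv 𝕜 m f =O[𝓝[≠] x₀] fun x ↦ ‖x - x₀‖ ^ (d + 1 - m))
    {m : ℕ} (hm : m ≤ d) : iteratedFDeriv 𝕜 m f =O[𝓝 x₀] fun x ↦ ‖x - x₀‖ ^ (d + 1 - m) := by
  suffices hzero : iteratedFDeriv 𝕜 m f x₀ = 0 by
    rw [← nhdsNE_sup_pure x₀, isBigO_sup]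
    exact ⟨hO m hm, isBigO_pure.2 fun _ ↦ hzero⟩
  cases m with
  | zero => rw [iteratedFDeriv_zero_eq_comp, Function.comp_apply, h₀, map_zero]
  | succ m =>
    have hderiv := (isBigO_nhds_iteratedFDeriv_of_nhdsNE h₀ hO (m := m) (by lia)).hasFDerivAt
      (𝕜 := 𝕜) (by lia)
    rw [iteratedFDeriv_succ_eq_comp_left, Function.comp_apply, hderiv.fderiv,
      LinearIsometryEquiv.map_zero]

theorem contDiff_of_isBigO_iteratedFDeriv (hf : ∀ x ≠ x₀, ContDiffAt 𝕜 d f x) (h₀ : f x₀ = 0)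
    (hO : ∀ m ≤ d, iteratedFDeriv 𝕜 m f =O[𝓝[≠] x₀] fun x ↦ ‖x - x₀‖ ^ (d + 1 - m)) :
    ContDiff 𝕜 d f := by
  have hO' {m : ℕ} (hm : m ≤ d) := isBigO_nhds_iteratedFDeriv_of_nhdsNE h₀ hO hm
  refine contDiff_iff_continuous_differentiable (n := d).2
    ⟨fun m hm ↦ continuous_iff_continuousAt.2 fun x ↦ ?_, fun m hm x ↦ ?_⟩ <;>
  norm_cast at hm <;> obtain rfl | hx := eq_or_ne x x₀
  · have hlim : Tendsto (fun y ↦ ‖y - x‖ ^ (d + 1 - m)) (𝓝 x) (𝓝 0) :=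
      Continuous.tendsto' (by fun_prop) _ _ (by simp; lia)
    rw [ContinuousAt, (hO' hm).eq_zero_of_norm_pow (by lia)]
    exact (hO' hm).trans_tendsto hlim
  · exact (hf x hx).continuousAt_iteratedFDeriv (mod_cast hm)
  · exact ((hO' hm.le).hasFDerivAt (by lia)).differentiableAt
  · exact (hf x hx).differentiableAt_iteratedFDeriv (mod_cast hm)

theorem iteratedFDeriv_comp_smul_of_ne_zero {c : 𝕜} (hc : c ≠ 0) (f : E → F) (m : ℕ) :
    iteratedFDeriv 𝕜 m (fun x ↦ f (c • x)) = fun x ↦ c ^ m • iteratedFDeriv 𝕜 m f (c • x) := by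
  ext x v
  let e : E ≃L[𝕜] E := ContinuousLinearEquiv.smulLeft (Units.mk0 c hc)
  have h := e.iteratedFDerivWithin_comp_right f uniqueDiffOn_univ (Set.mem_univ (e x)) m
  simp only [iteratedFDerivWithin_univ, Set.preimage_univ] at h
  calc iteratedFDeriv 𝕜 m (f ∘ e) x v = iteratedFDeriv 𝕜 m f (c • x) fun i ↦ c • v i := by
        rw [h]; rfl
    _ = (c ^ m • iteratedFDeriv 𝕜 m f (c • x)) v := by
        simp [ContinuousMultilinearMap.map_smul_univ]

theorem smul_iteratedFDeriv_of_homogeneous {p m : ℕ} {x : E} {c : 𝕜} (hc : c ≠ 0)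
    (hf : ContDiffAt 𝕜 m f x) (hom : ∀ y, f (c • y) = c ^ p • f y) :
    c ^ m • iteratedFDeriv 𝕜 m f (c • x) = c ^ p • iteratedFDeriv 𝕜 m f x := by
  rw [← iteratedFDeriv_const_smul_apply' hf]
  simp_rw [← hom, iteratedFDeriv_comp_smul_of_ne_zero hc]

end FlatPoint

section NormPow

variable {E : Type*} [NormedAddCommGroup E] [InnerProductSpace ℝ E]

theorem norm_iteratedFDeriv_comp_norm_congr {F : Type*} [NormedAddCommGroup F] [NormedSpace ℝ F]
    (g : ℝ → F) (m : ℕ) {x y : E} (h : ‖x‖ = ‖y‖) :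
    ‖iteratedFDeriv ℝ m (fun z : E ↦ g ‖z‖) x‖ = ‖iteratedFDeriv ℝ m (fun z : E ↦ g ‖z‖) y‖ := by
  set R := (ℝ ∙ (x - y))ᗮ.reflection
  have hinv : (fun z : E ↦ g ‖z‖) ∘ R = fun z ↦ g ‖z‖ := by ext z; simp
  rw [← Submodule.reflection_sub h, ← R.norm_iteratedFDeriv_comp_right, hinv]

theorem norm_iteratedFDeriv_norm_pow {p m : ℕ} (hm : m ≤ p) {x e : E} (hx : x ≠ 0) (he : ‖e‖ = 1) :
    ‖iteratedFDeriv ℝ m (fun z : E ↦ ‖z‖ ^ p) x‖ =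
      ‖x‖ ^ (p - m) * ‖iteratedFDeriv ℝ m (fun z : E ↦ ‖z‖ ^ p) e‖ := by
  have hpos : 0 < ‖x‖ := norm_pos_iff.2 hx
  have he₀ : e ≠ 0 := norm_ne_zero_iff.1 (by simp [he])
  have hscale := congr(‖$(smul_iteratedFDeriv_of_homogeneous (p := p) (m := m) hpos.ne'
    ((contDiffAt_norm ℝ he₀).pow p) fun y ↦ by simp [norm_smul, mul_pow])‖)
  have hrot := norm_iteratedFDeriv_comp_norm_congr (· ^ p) m (x := ‖x‖ • e) (y := x)
    (by simp [norm_smul, he])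
  rw [norm_smul, norm_smul, hrot, norm_pow, norm_pow, norm_norm,
    ← Nat.add_sub_of_le hm, pow_add, mul_assoc] at hscale
  simpa [hm] using mul_left_cancel₀ (pow_pos hpos m).ne' hscale

theorem contDiff_norm_pow_succ (d : ℕ) : ContDiff ℝ d fun x : E ↦ ‖x‖ ^ (d + 1) := by
  cases subsingleton_or_nontrivial E
  · simpa only [Subsingleton.elim (_ : E) 0] using contDiff_const
  obtain ⟨e, he⟩ := exists_norm_eq E zero_le_one
  refine contDiff_of_isBigO_iteratedFDeriv (x₀ := 0)
    (fun x hx ↦ (contDiffAt_norm ℝ hx).pow _) (by simp) fun m hm ↦ ?_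
  refine .of_bound ‖iteratedFDeriv ℝ m (fun z : E ↦ ‖z‖ ^ (d + 1)) e‖ ?_
  filter_upwards [self_mem_nhdsWithin] with x hx
  rw [norm_iteratedFDeriv_norm_pow (by lia) hx he, sub_zero, norm_pow, norm_norm, mul_comm]

end NormPow

section EntireSum

open PowerSeries

/-- The formal power series `p` converges on the whole field, with sum the function `f`. -/
def HasEntireSum {𝕜 : Type*} [NormedField 𝕜] (p : 𝕜⟦X⟧) (f : 𝕜 → 𝕜) : Prop :=
  ∀ t, HasSum (fun i ↦ coeff i p * t ^ i) (f t)

namespace HasEntireSum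

section RCLike

variable {𝕜 : Type*} [RCLike 𝕜] {p q : 𝕜⟦X⟧} {f g : 𝕜 → 𝕜}

theorem sub (hp : HasEntireSum p f) (hq : HasEntireSum q g) :
    HasEntireSum (p - q) fun t ↦ f t - g t := fun t ↦ by
  simpa only [map_sub, sub_mul] using (hp t).sub (hq t)

theorem mul (hp : HasEntireSum p f) (hq : HasEntireSum q g) :
    HasEntireSum (p * q) fun t ↦ f t * g t := fun t ↦ by
  have hterm (i : ℕ) : coeff i (p * q) * t ^ i =
      ∑ ij ∈ antidiagonal i, coeff ij.1 p * t ^ ij.1 * (coeff ij.2 q * t ^ ij.2) := by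
    rw [coeff_mul, sum_mul]
    refine sum_congr rfl fun ij hij ↦ ?_
    rw [← mem_antidiagonal.1 hij, pow_add, mul_mul_mul_comm]
  have hp' := (hp t).summable.norm
  have hq' := (hq t).summable.norm
  simp_rw [hterm, ← (hp t).tsum_eq, ← (hq t).tsum_eq,
    tsum_mul_tsum_eq_tsum_sum_antidiagonal_of_summable_norm hp' hq']
  exact (summable_norm_sum_mul_antidiagonal_of_summable_norm hp' hq').of_norm.hasSum

theorem rescale (hp : HasEntireSum p f) (c : 𝕜) :
    HasEntireSum (PowerSeries.rescale c p) fun t ↦ f (c * t) := fun t ↦ by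
  simpa only [coeff_rescale, mul_pow, mul_left_comm, mul_assoc] using hp (c * t)

theorem coe_polynomial (P : Polynomial 𝕜) : HasEntireSum (P : 𝕜⟦X⟧) P.eval := fun t ↦ by
  simp_rw [Polynomial.coeff_coe, P.eval_eq_sum_range]
  refine hasSum_sum_of_ne_finset_zero fun i hi ↦ ?_
  rw [Polynomial.coeff_eq_zero_of_natDegree_lt (by simpa using hi), zero_mul]

theorem subseries (hp : HasEntireSum p f) {e : ℕ → ℕ} (he : StrictMono e) :
    ∃ g, HasEntireSum (PowerSeries.mk fun i ↦ coeff (e i) p) g := by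
  suffices h : ∀ t : 𝕜, Summable fun i ↦ coeff (e i) p * t ^ i from
    ⟨fun t ↦ ∑' i, coeff (e i) p * t ^ i, fun t ↦ by simpa only [coeff_mk] using (h t).hasSum⟩
  intro t
  refine .of_norm_bounded ((hp ↑(‖t‖ + 1)).summable.norm.comp_injective he.injective) fun i ↦ ?_
  rw [Function.comp_apply, norm_mul, norm_mul, norm_pow, norm_pow,
    RCLike.norm_of_nonneg (by positivity)]
  gcongr
  calc ‖t‖ ^ i ≤ (‖t‖ + 1) ^ i := by gcongr; simp
    _ ≤ (‖t‖ + 1) ^ e i := pow_le_pow_right₀ (by simp) (he.le_apply)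

theorem exists_eq_mul (hp : HasEntireSum p f) (h₀ : coeff 0 p = 0) :
    ∃ g, HasEntireSum (PowerSeries.mk fun i ↦ coeff (i + 1) p) g ∧ ∀ t, f t = t * g t := by
  obtain ⟨g, hg⟩ := hp.subseries (strictMono_id.add_const 1)
  refine ⟨g, hg, fun t ↦ (hp t).unique ?_⟩
  rw [← hasSum_nat_add_iff' 1]
  simpa [h₀, pow_succ', mul_left_comm] using (hg t).mul_left t

theorem contDiff (hp : HasEntireSum p f) {n : WithTop ℕ∞} : ContDiff 𝕜 n f := by
  set P := FormalMultilinearSeries.ofScalars 𝕜 fun i ↦ coeff i p with hP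
  have hradius : P.radius = ⊤ := by
    rw [FormalMultilinearSeries.radius_eq_top_iff_summable_norm]
    intro r
    simpa [hP, FormalMultilinearSeries.ofScalars_norm] using (hp (r : ℝ)).summable.norm
  have hsum : P.sum = f := by
    ext t
    simpa [FormalMultilinearSeries.sum, hP, mul_comm] using (hp t).tsum_eq
  have han := (P.hasFPowerSeriesOnBall (by simp [hradius])).analyticOnNhd
  rw [hradius, Metric.eball_top, hsum] at han
  exact han.contDiff

end RCLike

theorem exp : HasEntireSum (PowerSeries.exp ℝ) Real.exp := fun t ↦ by
  simpa [Real.exp_eq_exp_ℝ, div_eq_inv_mul] using NormedSpace.expSeries_div_hasSum_exp t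

theorem cos : HasEntireSum (PowerSeries.cos ℝ) Real.cos := fun t ↦ by
  rw [← add_zero (Real.cos t)]
  refine .even_add_odd ?_ ?_
  · simpa [PowerSeries.cos, div_mul_eq_mul_div] using Real.hasSum_cos t
  · simp [PowerSeries.cos]

variable {E : Type*} [NormedAddCommGroup E] [InnerProductSpace ℝ E]

theorem contDiff_comp_norm {p : ℝ⟦X⟧} {f : ℝ → ℝ} (hp : HasEntireSum p f) {n : ℕ}
    (hodd : ∀ m < n, coeff (2 * m + 1) p = 0) :
    ContDiff ℝ (2 * n : ℕ) fun x : E ↦ f ‖x‖ := by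
  obtain ⟨A, hA⟩ := hp.subseries (e := fun m ↦ 2 * m) fun _ _ _ ↦ by lia
  obtain ⟨B, hB⟩ := hp.subseries (e := fun m ↦ 2 * (m + n) + 1) fun _ _ _ ↦ by lia
  have hsplit (t : ℝ) : f t = A (t ^ 2) + t ^ (2 * n + 1) * B (t ^ 2) := by
    refine (hp t).unique (.even_add_odd ?_ ?_)
    · simpa [pow_mul] using hA (t ^ 2)
    · rw [← hasSum_nat_add_iff' n, sum_eq_zero fun m hm ↦ by simp [hodd m (mem_range.1 hm)],
        sub_zero]
      refine ((hB (t ^ 2)).mul_left (t ^ (2 * n + 1))).congr_fun fun m ↦ ?_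
      rw [coeff_mk]
      ring
  simp_rw [hsplit]
  exact (hA.contDiff.comp (contDiff_norm_sq ℝ)).add
    ((contDiff_norm_pow_succ _).mul (hB.contDiff.comp (contDiff_norm_sq ℝ)))

variable (E) in
theorem exists_contDiff_comp_norm {p : ℝ⟦X⟧} {f : ℝ → ℝ} (hp : HasEntireSum p f) {n : ℕ}
    (heven : ∀ m ≤ n, coeff (2 * m) p = 0) :
    ∃ g : ℝ → ℝ, ContDiff ℝ (2 * n : ℕ) (fun x : E ↦ g ‖x‖) ∧ ∀ t, f t = t * g t := by
  obtain ⟨g, hg, hdiv⟩ := hp.exists_eq_mul (heven 0 n.zero_le)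
  exact ⟨g, hg.contDiff_comp_norm fun m hm ↦ by simpa [mul_add_one] using heven (m + 1) hm, hdiv⟩

end HasEntireSum

end EntireSum

section ReverseBessel

open Polynomial

variable (K : Type*) [Field K]

/-- The reverse Bessel polynomial `θ_j`, of degree `j`. -/
noncomputable def reverseBessel (j : ℕ) : K[X] :=
  ∑ i ∈ range (j + 1), C ((2 * j - i)! / (i ! * (j - i)! * 2 ^ (j - i)) : K) * X ^ i

variable {K}

@[simp]
theorem reverseBessel_zero : reverseBessel K 0 = 1 := by
  simp [reverseBessel]

theorem coeff_reverseBessel_of_lt {j i : ℕ} (h : j < i) : (reverseBessel K j).coeff i = 0 := by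
  simp only [reverseBessel, finsetSum_coeff, coeff_C_mul_X_pow]
  exact sum_eq_zero fun l hl ↦ if_neg (by have := mem_range.1 hl; lia)

theorem coeff_reverseBessel_of_add_eq {i e j : ℕ} (h : i + e = j) :
    (reverseBessel K j).coeff i = (i + 2 * e)! / (i ! * e ! * 2 ^ e) := by
  subst h
  simp only [reverseBessel, finsetSum_coeff, coeff_C_mul_X_pow]
  rw [sum_ite_eq, if_pos (by simp), Nat.add_sub_cancel_left,
    show 2 * (i + e) - i = i + 2 * e by lia]

theorem reverseBessel_succ_sub_derivative [CharZero K] (j : ℕ) :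
    reverseBessel K (j + 1) - derivative (reverseBessel K (j + 1)) = X * reverseBessel K j := by
  have hfac (a : ℕ) : (a ! : K) ≠ 0 := Nat.cast_ne_zero.2 a.factorial_ne_zero
  have hsucc (a : ℕ) : (a + 1 : K) ≠ 0 := a.cast_add_one_ne_zero
  ext (_ | i)
  · rw [coeff_sub, coeff_derivative, coeff_X_mul_zero, sub_eq_zero,
      coeff_reverseBessel_of_add_eq (e := j + 1) (by lia),
      coeff_reverseBessel_of_add_eq (e := j) (by lia),
      show 0 + 2 * (j + 1) = 0 + 1 + 2 * j + 1 by ring]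
    simp only [Nat.factorial_succ _, pow_succ]
    push_cast
    field_simp [hfac, hsucc]
    ring
  rw [coeff_sub, coeff_derivative, coeff_X_mul]
  obtain h | rfl | h := lt_trichotomy i j
  · obtain ⟨e, rfl⟩ := Nat.exists_eq_add_of_lt h
    rw [coeff_reverseBessel_of_add_eq (i := i + 1) (e := e + 1) (by lia),
      coeff_reverseBessel_of_add_eq (i := i + 1 + 1) (e := e) (by lia),
      coeff_reverseBessel_of_add_eq (i := i) (e := e + 1) (by lia),
      show i + 1 + 2 * (e + 1) = i + 2 * e + 2 + 1 by ring,
      show i + 1 + 1 + 2 * e = i + 2 * e + 2 by ring,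
      show i + 2 * (e + 1) = i + 2 * e + 2 by ring, Nat.factorial_succ (i + 2 * e + 2),
      Nat.factorial_succ (i + 1), Nat.factorial_succ i, Nat.factorial_succ e]
    have h₂ := hsucc (i + 1)
    push_cast at h₂ ⊢
    field_simp [hfac, hsucc, h₂]
    ring
  · rw [coeff_reverseBessel_of_add_eq (add_zero _), coeff_reverseBessel_of_add_eq (add_zero _),
      coeff_reverseBessel_of_lt (by lia)]
    simp [hfac]
  · rw [coeff_reverseBessel_of_lt (by lia), coeff_reverseBessel_of_lt (by lia),
      coeff_reverseBessel_of_lt h, zero_mul, sub_zero]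

end ReverseBessel

section EvenCoefficients

open PowerSeries

variable {K : Type*} [Field K]

theorem factorial_mul_coeff_X_mul_of_derivative_eq_neg {F G : K⟦X⟧} (h : d⁄dX K F = -G) (m : ℕ) :
    ((2 * (m + 1))! : K) * coeff (2 * (m + 1)) (X * F) =
      (m + 1) * -2 * ((2 * m)! * coeff (2 * m) G) := by
  have hcoeff : coeff (2 * m + 1) F * (2 * m + 1) = -coeff (2 * m) G := by
    simpa [coeff_derivative] using congr(coeff (2 * m) $h)
  rw [mul_add_one, coeff_succ_X_mul, Nat.factorial_succ, Nat.factorial_succ]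
  push_cast
  linear_combination (2 * m + 2) * ((2 * m)! : K) * hcoeff

variable [CharZero K]

theorem derivative_expNeg : d⁄dX K (rescale (-1) (exp K)) = -rescale (-1) (exp K) := by
  ext i
  have hexp := congr(coeff i $(derivative_exp K))
  rw [coeff_derivative] at hexp
  rw [coeff_derivative, map_neg, coeff_rescale, coeff_rescale]
  linear_combination (-1) ^ (i + 1) * hexp

theorem derivative_expNeg_mul_reverseBessel (j : ℕ) :
    d⁄dX K (rescale (-1) (exp K) * (reverseBessel K (j + 1) : K⟦X⟧)) =
      -(X * (rescale (-1) (exp K) * (reverseBessel K j : K⟦X⟧))) := by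
  have hrec := congr(($(reverseBessel_succ_sub_derivative (K := K) j) : K⟦X⟧))
  push_cast at hrec
  rw [Derivation.leibniz, derivative_expNeg, derivative_coe, smul_eq_mul, smul_eq_mul]
  linear_combination -rescale (-1) (exp K) * hrec

theorem factorial_mul_coeff_X_mul_expNeg_mul_reverseBessel (j m : ℕ) :
    ((2 * m)! : K) * coeff (2 * m) (X * (rescale (-1) (exp K) * (reverseBessel K j : K⟦X⟧))) =
      m.descFactorial (j + 1) * (-2) ^ (j + 1) := by
  cases m with
  | zero => simp
  | succ m =>
    rw [Nat.succ_descFactorial_succ, Nat.cast_mul, Nat.cast_succ]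
    cases j with
    | zero =>
      rw [reverseBessel_zero, Polynomial.coe_one, mul_one,
        factorial_mul_coeff_X_mul_of_derivative_eq_neg derivative_expNeg]
      simp [coeff_rescale, coeff_exp, Nat.cast_ne_zero.2 (Nat.factorial_ne_zero _)]
    | succ j =>
      rw [factorial_mul_coeff_X_mul_of_derivative_eq_neg
          (derivative_expNeg_mul_reverseBessel j),
        factorial_mul_coeff_X_mul_expNeg_mul_reverseBessel j m]
      ring

/-- The polynomial factor of the non-oscillatory component: `g_{n+1}(r, k)` is
`exp (-kr) / (4πr)` times the value of `helmholtzPoly ℝ n` at `kr`. -/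
noncomputable def helmholtzPoly (K : Type*) [Field K] (n : ℕ) : K[X] :=
  1 + ∑ j ∈ range n, Polynomial.C ((j + 1)! : K)⁻¹ * (Polynomial.X * reverseBessel K j)

theorem sum_range_choose_mul_neg_two_pow {R : Type*} [CommRing R] {m n : ℕ} (h : m ≤ n) :
    ∑ j ∈ range (n + 1), (m.choose j : R) * (-2) ^ j = (-1) ^ m := by
  calc ∑ j ∈ range (n + 1), (m.choose j : R) * (-2) ^ j
    _ = ∑ j ∈ range (m + 1), (m.choose j : R) * (-2) ^ j := by
      refine (sum_subset (range_mono (by lia)) fun j _ hj ↦ ?_).symm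
      rw [Nat.choose_eq_zero_of_lt (by simpa using hj), Nat.cast_zero, zero_mul]
    _ = (-2 + 1) ^ m := by simp [add_pow, mul_comm]
    _ = (-1) ^ m := by norm_num

theorem factorial_mul_coeff_expNeg_mul_helmholtzPoly {m n : ℕ} (h : m ≤ n) :
    ((2 * m)! : K) * coeff (2 * m) (rescale (-1) (exp K) * (helmholtzPoly K n : K⟦X⟧)) =
      (-1) ^ m := by
  have hexpand : rescale (-1) (exp K) * (helmholtzPoly K n : K⟦X⟧) = rescale (-1) (exp K) +
      ∑ j ∈ range n, C ((j + 1)! : K)⁻¹ *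
        (X * (rescale (-1) (exp K) * (reverseBessel K j : K⟦X⟧))) := by
    rw [helmholtzPoly, ← Polynomial.coeToPowerSeries.ringHom_apply, map_add, map_sum]
    simp [mul_add, mul_sum, mul_left_comm (rescale (-1) (exp K))]
  have hfac (j : ℕ) : (j ! : K) ≠ 0 := Nat.cast_ne_zero.2 j.factorial_ne_zero
  have hterm (j : ℕ) : ((2 * m)! : K) * (((j + 1)! : K)⁻¹ *
      coeff (2 * m) (X * (rescale (-1) (exp K) * (reverseBessel K j : K⟦X⟧)))) =
        m.choose (j + 1) * (-2) ^ (j + 1) := by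
    rw [mul_left_comm, factorial_mul_coeff_X_mul_expNeg_mul_reverseBessel,
      Nat.descFactorial_eq_factorial_mul_choose, Nat.cast_mul, mul_assoc,
      inv_mul_cancel_left₀ (hfac _)]
  rw [hexpand, map_add, map_sum, mul_add, mul_sum, ← sum_range_choose_mul_neg_two_pow h,
    sum_range_succ', add_comm]
  simp [coeff_C_mul, hterm, coeff_rescale, coeff_exp, hfac]

end EvenCoefficients

theorem eval_reverseBessel (j : ℕ) (t : ℝ) : (reverseBessel ℝ j).eval t =
    (1 / 2 ^ j) * ∑ m ∈ range (j + 1),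
      ((2 * j - m)! * 2 ^ m) / (m ! * (j - m)!) * t ^ m := by
  rw [reverseBessel, Polynomial.eval_finsetSum, mul_sum]
  refine sum_congr rfl fun m hm ↦ ?_
  obtain ⟨e, rfl⟩ := Nat.exists_eq_add_of_le (mem_range_succ_iff.1 hm)
  simp only [add_tsub_cancel_left, Polynomial.eval_mul, Polynomial.eval_C, Polynomial.eval_pow,
    Polynomial.eval_X, pow_add]
  field_simp

theorem helmholtzG3_succ (n : ℕ) (r k : ℝ) : helmholtzG3 (n + 1) r k =
    Real.exp (-(k * r)) * (helmholtzPoly ℝ n).eval (k * r) / (4 * Real.pi * r) := by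
  have hterm (j : ℕ) : (1 / (2 ^ (1 + j - 1) * ((1 + j)! : ℝ))) * ∑ m ∈ range (1 + j),
      ((2 * (1 + j) - m - 2)! * 2 ^ m) / (m ! * (1 + j - m - 1)!) * (k * r) ^ (m + 1) =
        ((j + 1)! : ℝ)⁻¹ * ((k * r) * (reverseBessel ℝ j).eval (k * r)) := by
    have hindex (m : ℕ) : 2 * (1 + j) - m - 2 = 2 * j - m ∧ 1 + j - m - 1 = j - m := by lia
    simp_rw [eval_reverseBessel, hindex, add_tsub_cancel_left, add_comm 1 j, mul_sum]
    refine sum_congr rfl fun m _ ↦ ?_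
    field
  simp only [helmholtzG3, sum_Ico_eq_sum_range, add_tsub_cancel_right, hterm, helmholtzPoly,
    Polynomial.eval_add, Polynomial.eval_one, Polynomial.eval_finsetSum, Polynomial.eval_mul,
    Polynomial.eval_C, Polynomial.eval_X]
  ring

theorem coeff_even_cos_sub_expNeg_mul_helmholtzPoly {m n : ℕ} (h : m ≤ n) :
    PowerSeries.coeff (2 * m) (PowerSeries.cos ℝ -
      PowerSeries.rescale (-1) (PowerSeries.exp ℝ) * (helmholtzPoly ℝ n : ℝ⟦X⟧)) = 0 := by
  have hfac : ((2 * m)! : ℝ) ≠ 0 := Nat.cast_ne_zero.2 (Nat.factorial_ne_zero _)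
  refine mul_left_cancel₀ hfac ?_
  rw [map_sub, mul_sub, factorial_mul_coeff_expNeg_mul_helmholtzPoly h]
  simp [PowerSeries.cos, mul_div_cancel₀ _ hfac]

theorem helmholtz_oscill_smoothness_general {E : Type*} [NormedAddCommGroup E]
    [InnerProductSpace ℝ E] (n : ℕ) (k : ℝ) :
    ∃ f : E → ℝ, ContDiff ℝ (2 * n : ℕ) f ∧
      ∀ x : E, x ≠ 0 →
        f x = Real.cos (k * ‖x‖) / (4 * Real.pi * ‖x‖) - helmholtzG3 (n + 1) ‖x‖ k := by
  have hosc := HasEntireSum.cos.sub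
    ((HasEntireSum.exp.rescale (-1)).mul (.coe_polynomial (helmholtzPoly ℝ n)))
  obtain ⟨g, hg, hdiv⟩ := (hosc.rescale k).exists_contDiff_comp_norm E fun m hm ↦ by
    rw [PowerSeries.coeff_rescale, coeff_even_cos_sub_expNeg_mul_helmholtzPoly hm, mul_zero]
  refine ⟨fun x ↦ 1 / (4 * Real.pi) * g ‖x‖, contDiff_const.mul hg, fun x hx ↦ ?_⟩
  have hx' : ‖x‖ ≠ 0 := norm_ne_zero_iff.2 hx
  rw [helmholtzG3_succ, ← neg_one_mul (k * ‖x‖), ← sub_div, hdiv]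
  field

/-- For every integer `n ≥ 1` and `k > 0`, the real part of the
oscillatory component `cos(k‖x‖)/(4π‖x‖) - g_n(‖x‖,k)` of the 3D Helmholtz
Green's function extends to a function of class `C^{2n-2}` on all of `ℝ³`. -/
theorem helmholtz_oscill_smoothness (n : ℕ) (hn : 1 ≤ n) (k : ℝ) (hk : 0 < k) :
    ∃ f : EuclideanSpace ℝ (Fin 3) → ℝ, ContDiff ℝ (2 * n - 2 : ℕ) f ∧
      ∀ x : EuclideanSpace ℝ (Fin 3), x ≠ 0 →
        f x = Real.cos (k * ‖x‖) / (4 * Real.pi * ‖x‖) - helmholtzG3 n ‖x‖ k := by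
  obtain ⟨n, rfl⟩ := Nat.exists_eq_add_of_le' hn
  exact helmholtz_oscill_smoothness_general n k
end

section
/- For every k > 0, the function q_4(r,k) = cos(kr)/(4πr) − g_4(r,k) satisfies q_4(r,k) = (k/(4π))(−1 + (kr)⁴/120 − (kr)⁶/840 + (kr)⁷/2520) + O(r⁸) as r → 0⁺; i.e., there exist C > 0 and δ > 0 such that |q_4(r,k) − (k/(4π))(−1 + (kr)⁴/120 − (kr)⁶/840 + (kr)⁷/2520)| ≤ C r⁸ for all 0 < r < δ. -/
/-!
Up to the factor `1 / (4πr)`, the difference `q₄(r, k) - (k / (4π)) (-1 + ⋯)` depends only on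
`z = kr`. Replacing `cos z` and `exp (-z)` by their Taylor polynomials of degree `8` leaves a
polynomial in which every power of `z` below the ninth cancels, so this function of `z` is
`O(z⁹)`; dividing by `r` gives `O(r⁸)`.
-/

open Asymptotics Complex Filter Topology

theorem isBigO_mul_of_continuousAt {α R F : Type*} [TopologicalSpace α]
    [SeminormedRing R] [SeminormedAddCommGroup F] {f u : α → R} {g : α → F} {a : α}
    (hf : f =O[𝓝 a] g) (hu : ContinuousAt u a) :
    (fun x ↦ f x * u x) =O[𝓝 a] g :=
  (hf.norm_right.mul (hu.tendsto.isBigO_one ℝ)).trans (by simpa using isBigO_refl g (𝓝 a))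

theorem exists_pos_forall_norm_le_of_isBigO_nhdsNE {α E F : Type*} [PseudoMetricSpace α]
    [Norm E] [SeminormedAddCommGroup F] {f : α → E} {g : α → F} {a : α} (h : f =O[𝓝[≠] a] g) :
    ∃ C > 0, ∃ δ > 0, ∀ x ≠ a, dist x a < δ → ‖f x‖ ≤ C * ‖g x‖ := by
  obtain ⟨C, hC, hbound⟩ := h.exists_pos
  obtain ⟨δ, hδ, hball⟩ :=
    Metric.eventually_nhds_iff.mp (eventually_nhdsWithin_iff.mp hbound.bound)
  exact ⟨C, hC, δ, hδ, fun x hx hxδ ↦ hball hxδ hx⟩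

theorem isBigO_pow_comp_const_mul {𝕜 E : Type*} [NormedField 𝕜] [Norm E] {f : 𝕜 → E} {n : ℕ}
    (hf : f =O[𝓝 0] fun x ↦ x ^ n) (c : 𝕜) :
    (fun x ↦ f (c * x)) =O[𝓝 0] fun x ↦ x ^ n := by
  have hc : Tendsto (fun x ↦ c * x) (𝓝 0) (𝓝 0) :=
    (continuous_const_mul c).tendsto' 0 0 (mul_zero c)
  exact (hf.comp_tendsto hc).trans ((isBigO_const_mul_self c id (𝓝 0)).pow n)

theorem exp_const_mul_sub_sum_range_isBigO_pow (c : ℂ) (n : ℕ) :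
    (fun z : ℂ ↦ exp (c * z) - ∑ m ∈ Finset.range n, (c * z) ^ m / m.factorial)
      =O[𝓝 0] fun z ↦ z ^ n :=
  isBigO_pow_comp_const_mul (exp_sub_sum_range_isBigO_pow n) c

theorem cos_taylor_sum_eq_half_exp_taylor_sums (z : ℂ) (n : ℕ) :
    ∑ m ∈ Finset.range n, (-1) ^ m * z ^ (2 * m) / (2 * m).factorial =
      (∑ m ∈ Finset.range (2 * n), (I * z) ^ m / m.factorial +
        ∑ m ∈ Finset.range (2 * n), (-I * z) ^ m / m.factorial) / 2 := by
  induction n with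
  | zero => simp
  | succ n ih =>
    have hI : I ^ (2 * n) = (-1) ^ n := by rw [pow_mul, I_sq]
    have hnegI : (-I) ^ (2 * n) = (-1) ^ n := by rw [pow_mul, neg_sq, I_sq]
    simp only [mul_add_one, Finset.sum_range_succ, ih, mul_pow, pow_succ _ (2 * n), hI, hnegI]
    ring

theorem cos_sub_sum_range_isBigO_pow (n : ℕ) :
    (fun z : ℂ ↦ cos z - ∑ m ∈ Finset.range n, (-1) ^ m * z ^ (2 * m) / (2 * m).factorial)
      =O[𝓝 0] fun z ↦ z ^ (2 * n) := by
  refine (((exp_const_mul_sub_sum_range_isBigO_pow I (2 * n)).add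
    (exp_const_mul_sub_sum_range_isBigO_pow (-I) (2 * n))).const_mul_left (1 / 2)).congr_left
    fun z ↦ ?_
  rw [cos_taylor_sum_eq_half_exp_taylor_sums, cos, mul_comm z I, neg_mul_comm z I, mul_comm z (-I)]
  ring

/-- The non-oscillatory component `g₄(r, k)` of the Helmholtz Green's function, continued to
complex wavenumber `k` and complex `r`. -/
noncomputable def helmholtzG4 (k r : ℂ) : ℂ :=
  1 / (4 * Real.pi) * (exp (-(k * r)) / r) *
    (1 + 2 * (k * r) + (k * r) ^ 2 + 1 / 6 * (k * r) ^ 3)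

/-- The function `q₄(r, k) = cos (k r) / (4 π r) - g₄(r, k)`, continued to complex `k` and `r`; for
real arguments it is the real part of the oscillatory component of the Green's function. -/
noncomputable def helmholtzQ4 (k r : ℂ) : ℂ :=
  cos (k * r) / (4 * Real.pi * r) - helmholtzG4 k r

/-- The dimensionless form, in `z = k r`, of the remainder of the Taylor expansion of `q₄`,
cleared of its factor `1 / (4 π r)`. -/
noncomputable def helmholtzQ4Remainder (z : ℂ) : ℂ :=
  cos z - exp (-z) * (1 + 2 * z + z ^ 2 + 1 / 6 * z ^ 3) -
    z * (-1 + z ^ 4 / 120 - z ^ 6 / 840 + z ^ 7 / 2520)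

theorem helmholtzQ4_sub_taylor_eq (k : ℂ) {r : ℂ} (hr : r ≠ 0) :
    helmholtzQ4 k r - k / (4 * Real.pi) *
        (-1 + (k * r) ^ 4 / 120 - (k * r) ^ 6 / 840 + (k * r) ^ 7 / 2520) =
      1 / (4 * Real.pi) * (helmholtzQ4Remainder (k * r) * r⁻¹) := by
  have hpi : (Real.pi : ℂ) ≠ 0 := ofReal_ne_zero.mpr Real.pi_ne_zero
  unfold helmholtzQ4 helmholtzG4 helmholtzQ4Remainder
  field_simp

theorem helmholtzQ4Remainder_eq_taylor_errors (z : ℂ) :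
    helmholtzQ4Remainder z =
      (cos z - ∑ m ∈ Finset.range 5, (-1) ^ m * z ^ (2 * m) / (2 * m).factorial) -
        (exp (-1 * z) - ∑ m ∈ Finset.range 9, (-1 * z) ^ m / m.factorial) *
          (1 + 2 * z + z ^ 2 + 1 / 6 * z ^ 3) +
        z ^ 9 * (-1 / 12096 + z / 120960 - z ^ 2 / 241920) := by
  simp only [helmholtzQ4Remainder, Finset.sum_range_succ, Finset.sum_range_zero, Nat.factorial,
    neg_one_mul]
  push_cast
  ring

theorem helmholtzQ4Remainder_isBigO_pow_nine :
    helmholtzQ4Remainder =O[𝓝 0] fun z ↦ z ^ 9 := by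
  have hcos := (cos_sub_sum_range_isBigO_pow 5).trans
    (isLittleO_pow_pow (by norm_num : 9 < 2 * 5)).isBigO
  have hexp := isBigO_mul_of_continuousAt (exp_const_mul_sub_sum_range_isBigO_pow (-1) 9)
    (u := fun z ↦ 1 + 2 * z + z ^ 2 + 1 / 6 * z ^ 3) (by fun_prop)
  have hpoly := isBigO_mul_of_continuousAt (isBigO_refl (fun z : ℂ ↦ z ^ 9) (𝓝 0))
    (u := fun z ↦ -1 / 12096 + z / 120960 - z ^ 2 / 241920) (by fun_prop)
  exact ((hcos.sub hexp).add hpoly).congr_left fun z ↦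
    (helmholtzQ4Remainder_eq_taylor_errors z).symm

theorem helmholtz_q4_taylor_general (k : ℂ) :
    (fun r : ℂ ↦ helmholtzQ4 k r - k / (4 * Real.pi) *
        (-1 + (k * r) ^ 4 / 120 - (k * r) ^ 6 / 840 + (k * r) ^ 7 / 2520))
      =O[𝓝[≠] 0] fun r ↦ r ^ 8 := by
  have hrem : (fun r : ℂ ↦ helmholtzQ4Remainder (k * r)) =O[𝓝[≠] 0] fun r ↦ r ^ 9 :=
    (isBigO_pow_comp_const_mul helmholtzQ4Remainder_isBigO_pow_nine k).mono nhdsWithin_le_nhds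
  refine ((hrem.mul (isBigO_refl (fun r ↦ r⁻¹) (𝓝[≠] 0))).const_mul_left
    (1 / (4 * (Real.pi : ℂ)))).congr' ?_ ?_
  · filter_upwards [self_mem_nhdsWithin] with r hr
    exact (helmholtzQ4_sub_taylor_eq k hr).symm
  · filter_upwards [self_mem_nhdsWithin] with r hr
    rw [pow_succ, mul_inv_cancel_right₀ hr]

/-- For every `k > 0`, the real part of the oscillatory component
`q₄(r,k) = cos(kr)/(4πr) - g₄(r,k)` with
`g₄(r,k) = (1/(4π)) (e^{-kr}/r)(1 + 2kr + (kr)² + (1/6)(kr)³)` satisfies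
`q₄(r,k) = (k/(4π))(-1 + (kr)⁴/120 - (kr)⁶/840 + (kr)⁷/2520) + O(r⁸)` as `r → 0⁺`. -/
theorem helmholtz_q4_taylor (k : ℝ) (hk : 0 < k) :
    ∃ C > (0 : ℝ), ∃ δ > (0 : ℝ), ∀ r : ℝ, 0 < r → r < δ →
      |Real.cos (k * r) / (4 * Real.pi * r) -
          (1 / (4 * Real.pi)) * (Real.exp (-(k * r)) / r) *
            (1 + 2 * (k * r) + (k * r) ^ 2 + 1 / 6 * (k * r) ^ 3) -
        k / (4 * Real.pi) *
          (-1 + (k * r) ^ 4 / 120 - (k * r) ^ 6 / 840 + (k * r) ^ 7 / 2520)|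
        ≤ C * r ^ 8 := by
  obtain ⟨C, hC, δ, hδ, hbound⟩ :=
    exists_pos_forall_norm_le_of_isBigO_nhdsNE (helmholtz_q4_taylor_general k)
  refine ⟨C, hC, δ, hδ, fun r hr hrδ ↦ ?_⟩
  have hr_bound := hbound r (ofReal_ne_zero.mpr hr.ne') (by simpa [abs_of_pos hr] using hrδ)
  rw [norm_pow, norm_real, Real.norm_of_nonneg hr.le] at hr_bound
  rw [← Real.norm_eq_abs, ← norm_real]
  push_cast
  exact hr_bound
end

section
/- For every integer n ≥ 1 and all reals r > 0, k > 0, ∫_{−∞}^{∞} e^{−r² e^t / 4} · (1/(8π^{3/2})) e^{−k² e^{−t} + t/2} (Σ_{j=0}^{n−1} (2k² e^{−t})^j / j!) dt = g_n(r,k), i.e. the non-oscillatory component g_n admits the integral representation g_n(r,k) = ∫_{−∞}^{∞} e^{−r² e^t/4} w_n(k,t) dt with w_n(k,t) = (1/(8π^{3/2})) e^{−k² e^{−t} + t/2} Σ_{j=0}^{n−1} (2k² e^{−t})^j / j!. -/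
/-- The weight `w_n(k,t) = (1/(8π^{3/2})) e^{-k² e^{-t} + t/2} ∑_{j=0}^{n-1} (2k² e^{-t})^j / j!`. -/
noncomputable def helmholtzW3 (n : ℕ) (k t : ℝ) : ℝ :=
  (1 / (8 * Real.pi ^ ((3 : ℝ) / 2))) * Real.exp (-(k ^ 2 * Real.exp (-t)) + t / 2) *
    ∑ j ∈ Finset.range n, (2 * k ^ 2 * Real.exp (-t)) ^ j / (Nat.factorial j : ℝ)

/-!
Expanding the weight turns the integral into a combination of the integrals
`∫ exp (-p² eᵗ - q² e⁻ᵗ + s t) dt` with `p = r / 2`, `q = k` and `s = 1 / 2 - j`. The translation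
`t ↦ t + log (q / p)` balances the two exponentials and shows that each of them is a multiple of the
modified Bessel function `K_s(2 p q) = K_s(k r)`. At half-integer orders `K_s` is elementary:
`K_{1/2}` becomes a Gaussian integral under `x = sinh (t / 2)`, and
`zⁿ K_{n + 1/2}(z) = K_{1/2}(z) θ_n(z)` with `θ_n` the `n`-th reverse Bessel polynomial, since both
sides satisfy the same three-term recurrence. Up to a factor `2 ^ (j - 1) * k r`, the inner sum in
`g_n` is `θ_{j-1}(k r)`.
-/

open Finset MeasureTheory Polynomial Real

section BesselK

theorem one_add_sq_div_two_le_cosh (t : ℝ) : 1 + t ^ 2 / 2 ≤ cosh t := by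
  have h := sum_le_hasSum (range 2) (fun n _ => by rw [pow_mul]; positivity) (hasSum_cosh t)
  simpa [sum_range_succ] using h

theorem integrable_exp_neg_mul_cosh_add {z : ℝ} (hz : 0 < z) (ν : ℝ) :
    Integrable fun t : ℝ => exp (-(z * cosh t) + ν * t) := by
  have hgauss : Integrable fun t : ℝ => exp (-(z / 2) * t ^ 2 + ν * t) := by
    have h := (integrable_cexp_quadratic (b := (z / 2 : ℝ)) (by simpa using hz) ν 0).norm
    simpa [Complex.norm_exp, ← Complex.ofReal_pow] using h
  refine hgauss.mono' (by fun_prop) (.of_forall fun t => ?_)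
  rw [norm_of_nonneg (exp_pos _).le, exp_le_exp]
  nlinarith [one_add_sq_div_two_le_cosh t]

/-- The modified Bessel function of the second kind `K_ν(z)`, for real order and argument `z > 0`
(for `z ≤ 0` the integral diverges and the value is `0`).
The integral over the whole line is twice the usual `∫₀^∞ exp (-z cosh t) cosh (ν t) dt`. -/
noncomputable def besselK (ν z : ℝ) : ℝ :=
  (∫ t : ℝ, exp (-(z * cosh t) + ν * t)) / 2

theorem besselK_neg (ν z : ℝ) : besselK (-ν) z = besselK ν z := by
  unfold besselK
  rw [← integral_neg_eq_self]
  simp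

theorem mul_besselK_add_one {z : ℝ} (hz : 0 < z) (ν : ℝ) :
    z * besselK (ν + 1) z = z * besselK (ν - 1) z + 2 * ν * besselK ν z := by
  let f (μ t : ℝ) : ℝ := exp (-(z * cosh t) + μ * t)
  have hf (μ : ℝ) : Integrable (f μ) := integrable_exp_neg_mul_cosh_add hz μ
  have hderiv (t : ℝ) :
      HasDerivAt (f ν) (z / 2 * f (ν - 1) t - z / 2 * f (ν + 1) t + ν * f ν t) t := by
    refine (((hasDerivAt_cosh t).const_mul z).neg.add
      ((hasDerivAt_id t).const_mul ν)).exp.congr_deriv ?_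
    have hadd : f (ν + 1) t = f ν t * exp t := by simp only [f, ← exp_add]; ring_nf
    have hsub : f (ν - 1) t = f ν t * exp (-t) := by simp only [f, ← exp_add]; ring_nf
    rw [hadd, hsub, sinh_eq]
    simp only [f, Pi.add_apply, Pi.neg_apply, id]
    ring
  have hdiff : Integrable fun t => z / 2 * f (ν - 1) t - z / 2 * f (ν + 1) t :=
    ((hf _).const_mul _).sub ((hf _).const_mul _)
  have hlin := (hf ν).const_mul ν
  have hzero := integral_eq_zero_of_hasDerivAt_of_integrable hderiv (hdiff.add hlin) (hf ν)
  rw [integral_add hdiff hlin, integral_sub ((hf _).const_mul _) ((hf _).const_mul _)] at hzero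
  simp only [integral_const_mul, f] at hzero
  unfold besselK
  linarith

theorem integral_cosh_smul_comp_sinh {E : Type*} [NormedAddCommGroup E] [NormedSpace ℝ E]
    (f : ℝ → E) : ∫ t, cosh t • f (sinh t) = ∫ x, f x := by
  have h := integral_image_eq_integral_abs_deriv_smul MeasurableSet.univ
    (fun t _ => (hasDerivAt_sinh t).hasDerivWithinAt) sinh_injective.injOn f
  simpa [sinh_surjective.range_eq, abs_of_pos (cosh_pos _)] using h.symm

theorem besselK_one_half {z : ℝ} (hz : 0 < z) :
    besselK (1 / 2) z = √(π / (2 * z)) * exp (-z) := by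
  have hcosh (t : ℝ) : exp (-(z * cosh t) + 1 / 2 * t) + exp (-(z * cosh t) + -(1 / 2) * t) =
      2 * exp (-z) * (cosh (t / 2) * exp (-(2 * z) * sinh (t / 2) ^ 2)) := by
    have hsq : cosh t = 1 + 2 * sinh (t / 2) ^ 2 := by
      rw [show t = 2 * (t / 2) by ring, cosh_two_mul, cosh_sq]; ring_nf
    have hsplit : -(z * cosh t) = -z + -(2 * z) * sinh (t / 2) ^ 2 := by rw [hsq]; ring
    rw [hsplit, exp_add _ (1 / 2 * t), exp_add _ (-(1 / 2) * t), exp_add (-z), cosh_eq]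
    ring_nf
  have hsubst : ∫ t, cosh (t / 2) * exp (-(2 * z) * sinh (t / 2) ^ 2) = 2 * √(π / (2 * z)) := by
    rw [Measure.integral_comp_div (fun t => cosh t * exp (-(2 * z) * sinh t ^ 2)),
      ← integral_gaussian, ← integral_cosh_smul_comp_sinh fun x => exp (-(2 * z) * x ^ 2)]
    simp
  calc besselK (1 / 2) z = (besselK (1 / 2) z + besselK (-(1 / 2)) z) / 2 := by
        rw [besselK_neg]; ring
    _ = (∫ t, (exp (-(z * cosh t) + 1 / 2 * t) + exp (-(z * cosh t) + -(1 / 2) * t))) / 4 := by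
        rw [integral_add (integrable_exp_neg_mul_cosh_add hz _)
          (integrable_exp_neg_mul_cosh_add hz _)]
        unfold besselK
        ring
    _ = √(π / (2 * z)) * exp (-z) := by
        simp_rw [hcosh]
        rw [integral_const_mul, hsubst]
        ring

theorem neg_sq_mul_exp_add_log_div {p q : ℝ} (hp : 0 < p) (hq : 0 < q) (s t : ℝ) :
    -(p ^ 2 * exp (t + log (q / p))) - q ^ 2 * exp (-(t + log (q / p))) +
      s * (t + log (q / p)) = log (q / p) * s + (-(2 * p * q * cosh t) + s * t) := by
  rw [neg_add, exp_add, exp_add, exp_neg (log _), exp_log (div_pos hq hp), cosh_eq]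
  field_simp
  ring

theorem integrable_exp_neg_sq_mul_exp_sub_add {p q : ℝ} (hp : 0 < p) (hq : 0 < q) (s : ℝ) :
    Integrable fun t => exp (-(p ^ 2 * exp t) - q ^ 2 * exp (-t) + s * t) := by
  have h := (integrable_exp_neg_mul_cosh_add (z := 2 * p * q) (by positivity) s).const_mul
    (exp (log (q / p) * s))
  simp_rw [← exp_add, ← neg_sq_mul_exp_add_log_div hp hq] at h
  simpa using h.comp_sub_right (log (q / p))

theorem integral_exp_neg_sq_mul_exp_sub_add {p q : ℝ} (hp : 0 < p) (hq : 0 < q) (s : ℝ) :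
    ∫ t, exp (-(p ^ 2 * exp t) - q ^ 2 * exp (-t) + s * t) =
      2 * (q / p) ^ s * besselK s (2 * p * q) := by
  rw [← integral_add_right_eq_self _ (log (q / p))]
  simp_rw [neg_sq_mul_exp_add_log_div hp hq, exp_add (log (q / p) * s),
    ← rpow_def_of_pos (div_pos hq hp)]
  rw [integral_const_mul, besselK]
  ring

end BesselK

section ReverseBessel

/-- The coefficient `(m + 2d)! / (m! d! 2ᵈ)` of `zᵐ` in the reverse Bessel polynomial `θ_{m+d}`.
Indexing by the codegree `d` instead of the degree `m + d` avoids truncated subtraction. -/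
def reverseBesselCoeff (m d : ℕ) : ℚ :=
  (m + 2 * d).factorial / (m.factorial * d.factorial * 2 ^ d)

theorem reverseBesselCoeff_zero_right (m : ℕ) : reverseBesselCoeff m 0 = 1 := by
  simp [reverseBesselCoeff, Nat.factorial_ne_zero]

theorem reverseBesselCoeff_succ_of_lt_two {m : ℕ} (hm : m < 2) (d : ℕ) :
    reverseBesselCoeff m (d + 1) = (2 * m + 2 * d + 1) * reverseBesselCoeff m d := by
  unfold reverseBesselCoeff
  rw [show m + 2 * (d + 1) = m + 2 * d + 1 + 1 by ring]
  interval_cases m <;> simp only [Nat.factorial_succ, Nat.factorial_zero] <;> push_cast <;>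
    field_simp <;> ring

theorem reverseBesselCoeff_add_two_succ (m d : ℕ) :
    reverseBesselCoeff (m + 2) (d + 1) =
      (2 * m + 2 * d + 5) * reverseBesselCoeff (m + 2) d + reverseBesselCoeff m (d + 1) := by
  unfold reverseBesselCoeff
  rw [show m + 2 + 2 * (d + 1) = m + 2 * d + 1 + 1 + 1 + 1 by ring,
    show m + 2 + 2 * d = m + 2 * d + 1 + 1 by ring,
    show m + 2 * (d + 1) = m + 2 * d + 1 + 1 by ring]
  simp only [Nat.factorial_succ]
  push_cast
  field_simp
  ring

/-- The reverse Bessel polynomial `θ_n`, the monic polynomial of degree `n` for which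
`K_{n+1/2}(z) = √(π / (2z)) e⁻ᶻ θ_n(z) / zⁿ`. -/
noncomputable def reverseBesselPoly (n : ℕ) : ℚ[X] :=
  ∑ m ∈ range (n + 1), monomial m (reverseBesselCoeff m (n - m))

theorem coeff_reverseBesselPoly_add (m d : ℕ) :
    (reverseBesselPoly (m + d)).coeff m = reverseBesselCoeff m d := by
  simp [reverseBesselPoly, coeff_monomial]

theorem coeff_reverseBesselPoly_of_lt {n m : ℕ} (h : n < m) :
    (reverseBesselPoly n).coeff m = 0 := by
  rw [reverseBesselPoly, finsetSum_coeff]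
  refine sum_eq_zero fun i hi => coeff_monomial_of_ne _ ?_
  have := mem_range.1 hi
  omega

theorem reverseBesselPoly_zero : reverseBesselPoly 0 = 1 := by
  simp [reverseBesselPoly, reverseBesselCoeff]

theorem reverseBesselPoly_one : reverseBesselPoly 1 = X + 1 := by
  simp [reverseBesselPoly, reverseBesselCoeff, sum_range_succ, X, add_comm]

theorem reverseBesselPoly_add_two (n : ℕ) :
    reverseBesselPoly (n + 2) =
      C (2 * n + 3 : ℚ) * reverseBesselPoly (n + 1) + X ^ 2 * reverseBesselPoly n := by
  ext m
  rw [coeff_add, coeff_C_mul, coeff_X_pow_mul']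
  match m with
  | 0 =>
    have hcoeff (d : ℕ) : (reverseBesselPoly d).coeff 0 = reverseBesselCoeff 0 d := by
      simpa using coeff_reverseBesselPoly_add 0 d
    rw [hcoeff, hcoeff, reverseBesselCoeff_succ_of_lt_two two_pos, if_neg (by omega)]
    push_cast
    ring
  | 1 =>
    have hcoeff (d : ℕ) : (reverseBesselPoly (d + 1)).coeff 1 = reverseBesselCoeff 1 d := by
      rw [add_comm, coeff_reverseBesselPoly_add]
    rw [hcoeff, hcoeff, reverseBesselCoeff_succ_of_lt_two one_lt_two, if_neg (by omega)]
    push_cast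
    ring
  | m + 2 =>
    rw [if_pos (Nat.le_add_left 2 m), Nat.add_sub_cancel]
    obtain hlt | rfl | hgt := lt_trichotomy m n
    · obtain ⟨d, rfl⟩ := Nat.exists_eq_add_of_lt hlt
      rw [show m + d + 1 + 2 = m + 2 + (d + 1) by ring, show m + d + 1 + 1 = m + 2 + d by ring,
        add_assoc m d 1]
      simp only [coeff_reverseBesselPoly_add]
      rw [reverseBesselCoeff_add_two_succ]
      push_cast
      ring
    · have hmonic (d : ℕ) : (reverseBesselPoly d).coeff d = 1 := by
        simpa [reverseBesselCoeff_zero_right] using coeff_reverseBesselPoly_add d 0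
      rw [hmonic, hmonic, coeff_reverseBesselPoly_of_lt (by omega)]
      ring
    · have hvanish {d : ℕ} (hd : d < m + 2) := coeff_reverseBesselPoly_of_lt hd
      rw [hvanish (by omega), hvanish (by omega), coeff_reverseBesselPoly_of_lt hgt]
      ring

theorem aeval_reverseBesselPoly {A : Type*} [Semiring A] [Algebra ℚ A] (n : ℕ) (z : A) :
    aeval z (reverseBesselPoly n) =
      ∑ m ∈ range (n + 1), reverseBesselCoeff m (n - m) • z ^ m := by
  simp [reverseBesselPoly, aeval_monomial, Algebra.smul_def]

theorem pow_mul_besselK_add_one_half {z : ℝ} (hz : 0 < z) (n : ℕ) :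
    z ^ n * besselK (n + 1 / 2) z = besselK (1 / 2) z * aeval z (reverseBesselPoly n) := by
  induction n using Nat.twoStepInduction with
  | zero => simp [reverseBesselPoly_zero]
  | one =>
    have hrec := mul_besselK_add_one hz (1 / 2)
    rw [show (1 / 2 : ℝ) - 1 = -(1 / 2) by norm_num, besselK_neg, add_comm] at hrec
    simp only [reverseBesselPoly_one, map_add, map_one, aeval_X, pow_one, Nat.cast_one]
    linear_combination hrec
  | more n ih₀ ih₁ =>
    have hrec := mul_besselK_add_one hz (n + 1 + 1 / 2)
    rw [show (n + 1 + 1 / 2 : ℝ) + 1 = n + 2 + 1 / 2 by ring,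
      show (n + 1 + 1 / 2 : ℝ) - 1 = n + 1 / 2 by ring] at hrec
    simp only [reverseBesselPoly_add_two, map_add, map_mul, map_pow, aeval_C, aeval_X]
    push_cast at ih₁ ⊢
    rw [map_ofNat, map_ofNat]
    linear_combination z ^ (n + 1) * hrec + (2 * n + 3) * ih₁ + z ^ 2 * ih₀

end ReverseBessel

section Helmholtz

theorem sum_factorial_div_eq_aeval_reverseBesselPoly (n : ℕ) (z : ℝ) :
    1 / (2 ^ n * ((n + 1).factorial : ℝ)) * ∑ m ∈ range (n + 1),
        ((2 * (n + 1) - m - 2).factorial : ℝ) * 2 ^ m /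
          ((m.factorial : ℝ) * ((n + 1 - m - 1).factorial : ℝ)) * z ^ (m + 1) =
      z * aeval z (reverseBesselPoly n) / (n + 1).factorial := by
  rw [aeval_reverseBesselPoly, mul_sum, mul_sum, sum_div]
  refine sum_congr rfl fun m hm => ?_
  obtain ⟨d, rfl⟩ := Nat.exists_eq_add_of_le (Nat.lt_succ_iff.1 (mem_range.1 hm))
  rw [show 2 * (m + d + 1) - m - 2 = m + 2 * d by omega, show m + d + 1 - m - 1 = d by omega,
    Nat.add_sub_cancel_left, Rat.smul_def, reverseBesselCoeff]
  push_cast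
  field_simp
  ring

theorem helmholtzG3_succ_s9 (n : ℕ) (r k : ℝ) :
    helmholtzG3 (n + 1) r k = exp (-(k * r)) / (4 * π * r) *
      (1 + ∑ j ∈ range n,
        k * r * aeval (k * r) (reverseBesselPoly j) / (j + 1).factorial) := by
  rw [helmholtzG3, sum_Ico_eq_sum_range, div_mul_div_comm, one_mul]
  simp only [Nat.add_sub_cancel, add_comm 1, sum_factorial_div_eq_aeval_reverseBesselPoly]

theorem exp_mul_helmholtzW3 (n : ℕ) (r k t : ℝ) :
    exp (-(r ^ 2 * exp t / 4)) * helmholtzW3 n k t =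
      ∑ j ∈ range n, (1 / (8 * π ^ ((3 : ℝ) / 2)) * ((2 * k ^ 2) ^ j / j.factorial)) *
        exp (-((r / 2) ^ 2 * exp t) - k ^ 2 * exp (-t) + (1 / 2 - j) * t) := by
  rw [helmholtzW3, mul_sum, mul_sum]
  refine sum_congr rfl fun j _ => ?_
  have hexp : -((r / 2) ^ 2 * exp t) - k ^ 2 * exp (-t) + (1 / 2 - j) * t =
      -(r ^ 2 * exp t / 4) + (-(k ^ 2 * exp (-t)) + t / 2) + j * -t := by ring
  rw [hexp, exp_add _ (j * -t), exp_add (-(r ^ 2 * exp t / 4)), exp_nat_mul, mul_pow _ (exp (-t))]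
  ring

theorem integral_exp_mul_helmholtzW3 (n : ℕ) {r k : ℝ} (hr : 0 < r) (hk : 0 < k) :
    ∫ t, exp (-(r ^ 2 * exp t / 4)) * helmholtzW3 n k t =
      √(2 * k / r) / (4 * π ^ ((3 : ℝ) / 2)) *
        ∑ j ∈ range n, (k * r) ^ j * besselK (j - 1 / 2) (k * r) / j.factorial := by
  have hr2 : 0 < r / 2 := half_pos hr
  have hratio : k / (r / 2) = 2 * k / r := by field_simp
  simp_rw [exp_mul_helmholtzW3]
  rw [integral_finsetSum _ fun j _ => (integrable_exp_neg_sq_mul_exp_sub_add hr2 hk _).const_mul _,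
    mul_sum]
  refine sum_congr rfl fun j _ => ?_
  have hpow : (2 * k ^ 2) ^ j = (k * r) ^ j * (2 * k / r) ^ j := by
    rw [← mul_pow]
    field_simp
  rw [integral_const_mul, integral_exp_neg_sq_mul_exp_sub_add hr2 hk, hratio,
    rpow_sub (by positivity), rpow_natCast, ← sqrt_eq_rpow, ← besselK_neg (j - 1 / 2), neg_sub,
    show 2 * (r / 2) * k = k * r by ring, hpow]
  field_simp
  ring

theorem sqrt_mul_besselK_one_half {r k : ℝ} (hr : 0 < r) (hk : 0 < k) :
    √(2 * k / r) / (4 * π ^ ((3 : ℝ) / 2)) * besselK (1 / 2) (k * r) =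
      exp (-(k * r)) / (4 * π * r) := by
  have hπ : π ^ ((3 : ℝ) / 2) = π * √π := by
    rw [show (3 : ℝ) / 2 = 1 + 1 / 2 by norm_num, rpow_add pi_pos, rpow_one, ← sqrt_eq_rpow]
  have hsqrt : √(2 * k / r) * √(π / (2 * (k * r))) = √π / r := by
    rw [← sqrt_mul (by positivity),
      show 2 * k / r * (π / (2 * (k * r))) = π / r ^ 2 by field_simp,
      sqrt_div pi_pos.le, sqrt_sq hr.le]
  rw [besselK_one_half (by positivity), hπ, div_mul_eq_mul_div, ← mul_assoc, hsqrt]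
  field_simp

end Helmholtz

/-- For every integer `n ≥ 1` and all reals `r > 0`, `k > 0`,
the non-oscillatory component has the Gaussian integral representation
`g_n(r,k) = ∫_{-∞}^{∞} e^{-r² e^t/4} w_n(k,t) dt`. -/
theorem helmholtzG3_gaussian_representation (n : ℕ) (hn : 1 ≤ n) (r k : ℝ)
    (hr : 0 < r) (hk : 0 < k) :
    ∫ t : ℝ, Real.exp (-(r ^ 2 * Real.exp t / 4)) * helmholtzW3 n k t =
      helmholtzG3 n r k := by
  have hz : 0 < k * r := mul_pos hk hr
  have hhalf (j : ℕ) : (k * r) ^ (j + 1) * besselK ((j + 1 : ℕ) - 1 / 2) (k * r) =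
      besselK (1 / 2) (k * r) * (k * r * aeval (k * r) (reverseBesselPoly j)) := by
    rw [show ((j + 1 : ℕ) - 1 / 2 : ℝ) = j + 1 / 2 by push_cast; ring, pow_succ', mul_assoc,
      pow_mul_besselK_add_one_half hz, mul_left_comm]
  obtain ⟨n, rfl⟩ := Nat.exists_eq_add_of_le' hn
  rw [integral_exp_mul_helmholtzW3 _ hr hk, helmholtzG3_succ_s9, ← sqrt_mul_besselK_one_half hr hk,
    mul_assoc, sum_range_succ']
  congr 1
  simp_rw [hhalf, mul_div_assoc (besselK _ _), ← mul_sum]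
  rw [Nat.cast_zero, zero_sub, besselK_neg, pow_zero, Nat.factorial_zero, Nat.cast_one]
  ring
end
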